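/- arXiv:1510.05835 — 2 statements merged into one kernel-verified Lean document; each statement's English description precedes it below -/
import Mathlib

section
/- Let r ≥ 2 be an integer, α_1,…,α_r ∈ [0,1), and suppose α_2 − α_1 is rational. Define the collection S of hyperplanes as follows: if α_2−α_1 = 0, S consists of H_{1,0}, H_{2,1}, H_{2,2k} for all integers k ≥ 0, and H_{i,k} for all 3 ≤ i ≤ r and k ≥ 0; if α_2−α_1 = 1/2, S consists of H_{1,0}, H_{2,2k} for all k ≥ 0, and H_{i,k} for all 3 ≤ i ≤ r and k ≥ 0; if α_2−α_1 ∈ ℚ ∖ {0, 1/2}, S consists of H_{1,0} and H_{i,k} for all 2 ≤ i ≤ r and k ≥ 0. Then: (a) there exists F analytic on ℂ^r ∖ ⋃_{H∈S} H with F(s) = ζ_r(s; α_1,…,α_r) for all s ∈ U_r, such that for every p ∈ ℂ^r the function s ↦ (∏_{H_{i,k}∈S, p∈H_{i,k}} (s_1+⋯+s_i−i+k)) · F(s) extends analytically to a neighborhood of p; and (b) for each H_{i,k} ∈ S there exists p ∈ H_{i,k} lying on no other member of S such that (s_1+⋯+s_i−i+k)·F(s) tends to a nonzero limit as s → p within ℂ^r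 ∖ ⋃_{H∈S} H. -/
/-!
Write `b = α_2 - α_1` and `w = s_1 - 1`. With the Bernoulli polynomials `B_k`, the
Euler-Maclaurin type expansion

  `w (X - b) ^ (-w - 1) = ∑_{k < N} B_k(b) / k! * w (w + 1) ⋯ (w + k - 1) *`
    `((X - 1) ^ (-w - k) - X ^ (-w - k)) + O(X ^ (-w - N - 1))`

at `X = n_1 + α_2` can be summed over `n_1 > n_2`, where the differences telescope. This expresses
`(s_1 - 1) ζ_r(s; α)` through `ζ_{r-1}(s_1 + s_2 - 1 + k, s_3, …; α_2, α_3, …)` for `k < N`, with a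
remainder that is analytic on `U_r(N)`. Induction on the depth, starting from the Hurwitz zeta
function, gives the continuation (`contZ`, `contZ_eq`). The only possible poles are those along
`H_{1,0}`, from the division by `s_1 - 1`, and the pullbacks `H_{i+1,m+k}` of the poles `H_{i,m}` of
lower depth, for those `k` with `B_k(b) ≠ 0` (`contZ_pol_step`). As `H_{1,0}` is the only pole of
index one, the poles of index two are exactly the `H_{2,k}` with `B_k(b) ≠ 0`, and Inkeri's theorem
on the rational zeros of Bernoulli polynomials, proved by `p`-adic estimates from the
von Staudt-Clausen theorem (`bernoulliFun_ne_zero_iff`), identifies these `k`.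

To see that a hyperplane is genuinely polar, take generic points on it whose coordinates of higher
index are large. There the residue is
`w⁻¹ ∑_κ B_κ(b) / κ! * w (w + 1) ⋯ (w + κ - 1) * R_κ`, where `R_κ` is a residue along
`H_{i-1,k-κ}` in lower depth at a point that can be kept fixed while `w` varies. The rising
factorials being linearly independent, it suffices that one summand is nonzero (`Nv_step`). Along
`H_{1,0}` the residue is a convergent series with positive terms (`Nv_zero`). For indices `i ≥ 3`
and an order `k` with `B_k(b) = 0`, the order is split between two consecutive steps; this works
since two consecutive differences of the parameters cannot both be `1/2` (`Nv_high`).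
-/

open Complex

/-- `e(a) = e^{2πia}`. -/
noncomputable def eR (a : ℝ) : ℂ := Complex.exp (2 * Real.pi * Complex.I * a)

/-- For a real `b > 0` and `z ∈ ℂ`, `b^z := exp (z log b)` (real logarithm). -/
noncomputable def rpowC (b : ℝ) (z : ℂ) : ℂ := Complex.exp (z * Real.log b)

/-- Strictly decreasing tuples of positive integers `n_1 > n_2 > ⋯ > n_r > 0`. -/
def DTuple (r : ℕ) : Type := {n : Fin r → ℕ // StrictAnti n ∧ ∀ i, 0 < n i}

/-- The term `e(λ_1 n_1)⋯e(λ_r n_r) / ((n_1+α_1)^{s_1}⋯(n_r+α_r)^{s_r})`. -/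
noncomputable def lerchTerm {r : ℕ} (lam al : Fin r → ℝ) (s : Fin r → ℂ)
    (n : Fin r → ℕ) : ℂ :=
  (∏ i, eR (lam i * n i)) / ∏ i, rpowC ((n i : ℝ) + al i) (s i)

/-- The multiple Lerch zeta function (as a sum over strictly decreasing tuples). -/
noncomputable def multipleLerch {r : ℕ} (lam al : Fin r → ℝ) (s : Fin r → ℂ) : ℂ :=
  ∑' n : DTuple r, lerchTerm lam al s n.1

/-- The term `(n_1+α_1)^{-s_1}⋯(n_r+α_r)^{-s_r}`. -/
noncomputable def hzTerm {r : ℕ} (al : Fin r → ℝ) (s : Fin r → ℂ) (n : Fin r → ℕ) : ℂ :=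
  ∏ i, rpowC ((n i : ℝ) + al i) (-(s i))

/-- The multiple Hurwitz zeta function (as a sum over strictly decreasing tuples). -/
noncomputable def multipleHurwitz {r : ℕ} (al : Fin r → ℝ) (s : Fin r → ℂ) : ℂ :=
  ∑' n : DTuple r, hzTerm al s n.1

/-- `U_r(m) = {s ∈ ℂ^r : Re(s_1+⋯+s_i) > i − m for 1 ≤ i ≤ r}` (0-based indexing). -/
def Ur (r : ℕ) (m : ℤ) : Set (Fin r → ℂ) :=
  {s | ∀ i : Fin r, ((i : ℕ) + 1 - m : ℝ) < (∑ j ∈ Finset.Iic i, s j).re}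

/-- `(s)_k = s(s+1)⋯(s+k)/(k+1)!` for `k ≥ 0` and `(s)_k = 1` for `k < 0`. -/
noncomputable def pochZ (s : ℂ) (k : ℤ) : ℂ :=
  if 0 ≤ k then (∏ j ∈ Finset.range (k.toNat + 1), (s + j)) / (Nat.factorial (k.toNat + 1))
  else 1

/-- The hyperplane `H_{i,k} : s_1 + ⋯ + s_i = i − k` (0-based: `i` here is paper's `i−1`). -/
def Hplane (r : ℕ) (i : Fin r) (k : ℕ) : Set (Fin r → ℂ) :=
  {s | ∑ j ∈ Finset.Iic i, s j = ((i : ℕ) + 1 : ℂ) - k}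

/-- The union of the hyperplanes `H_{i,k}` for `(i,k)` satisfying the predicate `P`. -/
def polarSet {r : ℕ} (P : Fin r → ℕ → Prop) : Set (Fin r → ℂ) :=
  {s | ∃ i k, P i k ∧ s ∈ Hplane r i k}

/-- `F` has (at most) simple poles along the hyperplanes `H_{i,k}`, `(i,k) ∈ P`:
around every point `p`, multiplying `F` by the (finitely many) linear factors
`s_1+⋯+s_i−i+k` of the members of `P` passing through `p` yields a function
that extends analytically to a neighbourhood of `p`. -/
def SimplePolesAlong {r : ℕ} (P : Fin r → ℕ → Prop) (F : (Fin r → ℂ) → ℂ) : Prop :=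
  ∀ p : Fin r → ℂ, ∀ T : Finset (Fin r × ℕ),
    (∀ i k, (i, k) ∈ T ↔ (P i k ∧ p ∈ Hplane r i k)) →
    ∃ (V : Set (Fin r → ℂ)) (G : (Fin r → ℂ) → ℂ),
      IsOpen V ∧ p ∈ V ∧ AnalyticOnNhd ℂ G V ∧
      ∀ s ∈ V, s ∉ polarSet P →
        G s = (∏ q ∈ T, ((∑ j ∈ Finset.Iic q.1, s j) - ((q.1 : ℕ) + 1 : ℂ) + (q.2 : ℂ))) * F s

/-- `H_{i,k}` is a genuine (simple) polar hyperplane of `F`: there is a point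
`p ∈ H_{i,k}` lying on no other member of the collection `P` such that
`(s_1+⋯+s_i−i+k)·F(s)` tends to a nonzero limit as `s → p` off the polar set. -/
def GenuinePole {r : ℕ} (P : Fin r → ℕ → Prop) (F : (Fin r → ℂ) → ℂ)
    (i : Fin r) (k : ℕ) : Prop :=
  ∃ p ∈ Hplane r i k,
    (∀ (i' : Fin r) (k' : ℕ), P i' k' → ¬(i' = i ∧ k' = k) → p ∉ Hplane r i' k') ∧
    ∃ L : ℂ, L ≠ 0 ∧
      Filter.Tendsto
        (fun s : Fin r → ℂ => ((∑ j ∈ Finset.Iic i, s j) - ((i : ℕ) + 1 : ℂ) + (k : ℂ)) * F s)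
        (nhdsWithin p (polarSet P)ᶜ) (nhds L)

/-- **The collection `S` of Corollary 9** (`b := α_2 − α_1` rational):
if `b = 0`: `H_{1,0}`, `H_{2,1}`, `H_{2,2k}` (`k ≥ 0`), and `H_{i,k}` (`3 ≤ i ≤ r`, `k ≥ 0`);
if `b = 1/2`: `H_{1,0}`, `H_{2,2k}` (`k ≥ 0`), and `H_{i,k}` (`3 ≤ i ≤ r`, `k ≥ 0`);
otherwise: `H_{1,0}` and `H_{i,k}` (`2 ≤ i ≤ r`, `k ≥ 0`)  (0-based indexing of `i`). -/
def S18 (r : ℕ) (b : ℝ) (i : Fin (r + 2)) (k : ℕ) : Prop :=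
  ((i : ℕ) = 0 ∧ k = 0) ∨ 2 ≤ (i : ℕ) ∨
    ((i : ℕ) = 1 ∧
      ((b = 0 ∧ (k = 1 ∨ Even k)) ∨ (b = 1 / 2 ∧ Even k) ∨ (b ≠ 0 ∧ b ≠ 1 / 2)))

/-! ### Series of analytic functions -/

/-- Iterated Cauchy estimate: on concentric balls shrinking by `ε` at each differentiation, every
derivative costs a factor `2 / ε`. -/
lemma norm_iteratedFDeriv_le_of_bounded {E : Type*} [NormedAddCommGroup E] [NormedSpace ℂ E]
    {f : E → ℂ} {p : E} {ρ u ε : ℝ} (hε : 0 < ε)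
    (hf : AnalyticOnNhd ℂ f (Metric.ball p ρ)) (hb : ∀ x ∈ Metric.ball p ρ, ‖f x‖ ≤ u) (j : ℕ) :
    ∀ x, (Metric.closedBall x (j * ε) ⊆ Metric.ball p ρ) →
      ‖iteratedFDeriv ℂ j f x‖ ≤ u * (2 / ε) ^ j := by
  induction j with
  | zero =>
    intro x hx
    have : x ∈ Metric.ball p ρ := hx (by simp)
    simpa using hb x this
  | succ j ih =>
    intro x hx
    have hsub : ∀ y ∈ Metric.ball x ε, Metric.closedBall y (j * ε) ⊆ Metric.ball p ρ := by
      intro y hy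
      refine subset_trans (Metric.closedBall_subset_closedBall' ?_) hx
      have := (Metric.mem_ball.1 hy).le
      push_cast
      linarith
    have hmem : ∀ y ∈ Metric.ball x ε, y ∈ Metric.ball p ρ := fun y hy =>
      hsub y hy (Metric.mem_closedBall_self (by positivity))
    rw [← norm_fderiv_iteratedFDeriv]
    have hx0 : x ∈ Metric.ball x ε := Metric.mem_ball_self hε
    have := Complex.norm_fderiv_le_div_of_mapsTo_ball (f := iteratedFDeriv ℂ j f) (c := x)
      (R₁ := ε) (R₂ := 2 * (u * (2 / ε) ^ j)) ?_ ?_ hε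
    · refine this.trans (le_of_eq ?_)
      rw [pow_succ]; ring
    · intro y hy
      exact ((hf.iteratedFDeriv j) y (hmem y hy)).differentiableAt.differentiableWithinAt
    · intro y hy
      rw [Metric.mem_closedBall, dist_eq_norm]
      calc _ ≤ ‖iteratedFDeriv ℂ j f y‖ + ‖iteratedFDeriv ℂ j f x‖ := norm_sub_le _ _
        _ ≤ _ := by
          have h1 := ih y (hsub y hy)
          have h2 := ih x (hsub x hx0)
          linarith

/-- Weierstrass M-test for analytic functions on a normed space: a series of analytic functions
dominated on a ball by a summable sequence has an analytic sum at the centre. -/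
theorem analyticAt_tsum {ι : Type*} {E : Type*} [NormedAddCommGroup E] [NormedSpace ℂ E]
    {f : ι → E → ℂ} {u : ι → ℝ} {p : E} {ρ : ℝ} (hρ : 0 < ρ)
    (hf : ∀ n, AnalyticOnNhd ℂ (f n) (Metric.ball p ρ))
    (hb : ∀ n, ∀ x ∈ Metric.ball p ρ, ‖f n x‖ ≤ u n) (hu : Summable u) :
    AnalyticAt ℂ (fun x => ∑' n, f n x) p := by
  set q : ι → FormalMultilinearSeries ℂ E ℂ := fun n k =>
    ((k.factorial : ℂ)⁻¹) • iteratedFDeriv ℂ k (f n) p with hq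
  have hp : p ∈ Metric.ball p ρ := Metric.mem_ball_self hρ
  have hu0 : ∀ n, 0 ≤ u n := fun n => (norm_nonneg _).trans (hb n p hp)
  -- `k ^ k / k! ≤ exp k ≤ 3 ^ k` absorbs the cost of `k` Cauchy estimates on radius `ρ / (2 k)`
  have hqb : ∀ n k, ‖q n k‖ ≤ u n * (12 / ρ) ^ k := by
    intro n k
    rcases Nat.eq_zero_or_pos k with rfl | hk
    · simpa [hq] using hb n p hp
    have hk' : (0 : ℝ) < k := by exact_mod_cast hk
    have h1 := norm_iteratedFDeriv_le_of_bounded (ε := ρ / (2 * k)) (by positivity) (hf n) (hb n) k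
      p (Metric.closedBall_subset_ball (by field_simp; linarith))
    have hfac : (0 : ℝ) < k.factorial := by exact_mod_cast k.factorial_pos
    have h2 : (k : ℝ) ^ k / k.factorial ≤ 3 ^ k := by
      refine (Real.pow_div_factorial_le_exp (k : ℝ) hk'.le k).trans ?_
      rw [← Real.exp_one_pow]
      exact pow_le_pow_left₀ (Real.exp_pos _).le (Real.exp_one_lt_d9.le.trans (by norm_num)) _
    rw [hq]
    simp only [norm_smul, norm_inv, Complex.norm_natCast]
    calc (k.factorial : ℝ)⁻¹ * ‖iteratedFDeriv ℂ k (f n) p‖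
        ≤ (k.factorial : ℝ)⁻¹ * (u n * (2 / (ρ / (2 * k))) ^ k) := by gcongr
      _ = u n * (4 / ρ) ^ k * ((k : ℝ) ^ k / k.factorial) := by
          have : (2 / (ρ / (2 * (k : ℝ)))) = (4 / ρ) * k := by field_simp; ring
          rw [this, mul_pow]; ring
      _ ≤ u n * (4 / ρ) ^ k * 3 ^ k := by
          have := hu0 n
          gcongr
      _ = u n * (12 / ρ) ^ k := by
          rw [mul_assoc, ← mul_pow]; congr 2; ring
  set δ : NNReal := ⟨ρ / 24, by positivity⟩ with hδ
  have hδpos : 0 < δ := by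
    rw [← NNReal.coe_pos]
    change 0 < ρ / 24
    positivity
  have hδr : (δ : ℝ) = ρ / 24 := rfl
  have hhalf : (12 / ρ) * (δ : ℝ) = 1 / 2 := by rw [hδr]; field_simp; norm_num
  have hδball : Metric.eball p (δ : ENNReal) = Metric.ball p (ρ / 24) := by
    rw [Metric.eball_coe, hδr]
  have hqr : ∀ n, (δ : ENNReal) ≤ (q n).radius := by
    intro n
    refine (q n).le_radius_of_bound (u n) (fun k => ?_)
    calc ‖q n k‖ * (δ : ℝ) ^ k ≤ u n * (12 / ρ) ^ k * (δ : ℝ) ^ k := by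
          gcongr; exact hqb n k
      _ = u n * (1 / 2) ^ k := by rw [mul_assoc, ← mul_pow, hhalf]
      _ ≤ u n * 1 := by
          gcongr
          · exact hu0 n
          · exact pow_le_one₀ (by norm_num) (by norm_num)
      _ = u n := mul_one _
  -- the Taylor series at `p` represents `f n` on the whole ball of radius `δ`, by the identity
  -- theorem
  have hsum : ∀ n, ∀ y : E, ‖y‖ < δ → HasSum (fun k => q n k fun _ => y) (f n (p + y)) := by
    intro n
    have hrad : 0 < (q n).radius := lt_of_lt_of_le (by exact_mod_cast hδpos) (hqr n)
    have hqs := (q n).hasFPowerSeriesOnBall hrad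
    have hg : AnalyticOnNhd ℂ (fun x => (q n).sum (x - p)) (Metric.ball p (ρ / 24)) := by
      have h1 := hqs.comp_sub p
      rw [zero_add] at h1
      intro x hx
      refine h1.analyticAt_of_mem ?_
      refine Metric.eball_subset_eball (hqr n) ?_
      rw [hδball]; exact hx
    have hfn : AnalyticOnNhd ℂ (f n) (Metric.ball p (ρ / 24)) :=
      (hf n).mono (Metric.ball_subset_ball (by linarith))
    have heq : Set.EqOn (f n) (fun x => (q n).sum (x - p)) (Metric.ball p (ρ / 24)) := by
      refine hfn.eqOn_of_preconnected_of_eventuallyEq hg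
        (convex_ball p (ρ / 24)).isPreconnected (Metric.mem_ball_self (by positivity)) ?_
      obtain ⟨P, r, hP⟩ := hf n p hp
      have : ∀ᶠ y in nhds p, y ∈ Metric.eball p r := Metric.eball_mem_nhds _ hP.r_pos
      filter_upwards [this] with y hy
      have h2 := hP.hasSum_iteratedFDeriv (y := y - p) (by
        simpa [edist_eq_enorm_sub] using hy)
      rw [add_sub_cancel] at h2
      exact h2.tsum_eq.symm
    intro y hy
    have hy' : p + y ∈ Metric.ball p (ρ / 24) := by
      simpa [Metric.mem_ball, dist_eq_norm, hδr] using hy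
    rw [heq hy']
    simp only [add_sub_cancel_left]
    have := hqs.hasSum (y := y) (Metric.eball_subset_eball (hqr n) (by
      rw [Metric.eball_coe]; simpa using hy))
    simpa using this
  have hqk : ∀ k, Summable (fun n => q n k) := fun k =>
    Summable.of_norm_bounded (hu.mul_right ((12 / ρ) ^ k)) (fun n => hqb n k)
  refine ⟨fun k => ∑' n, q n k, δ, ⟨?_, by exact_mod_cast hδpos, ?_⟩⟩
  · refine FormalMultilinearSeries.le_radius_of_bound _ (∑' n, u n) (fun k => ?_)
    have h1 : ‖∑' n, q n k‖ ≤ ∑' n, u n * (12 / ρ) ^ k :=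
      tsum_of_norm_bounded (hu.mul_right _).hasSum (fun n => hqb n k)
    rw [tsum_mul_right] at h1
    have hU : 0 ≤ ∑' n, u n := tsum_nonneg hu0
    calc ‖∑' n, q n k‖ * (δ : ℝ) ^ k ≤ (∑' n, u n) * (12 / ρ) ^ k * (δ : ℝ) ^ k := by gcongr
      _ = (∑' n, u n) * (1 / 2) ^ k := by rw [mul_assoc, ← mul_pow, hhalf]
      _ ≤ (∑' n, u n) * 1 := by
          gcongr
          exact pow_le_one₀ (by norm_num) (by norm_num)
      _ = _ := mul_one _
  · intro y hy
    have hy' : ‖y‖ < δ := by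
      rw [Metric.eball_coe] at hy; simpa using hy
    have hbd : ∀ n k, ‖q n k fun _ => y‖ ≤ u n * (1 / 2) ^ k := by
      intro n k
      calc _ ≤ ‖q n k‖ * ∏ _i : Fin k, ‖y‖ := (q n k).le_opNorm _
        _ ≤ (u n * (12 / ρ) ^ k) * (δ : ℝ) ^ k := by
            rw [Finset.prod_const, Finset.card_univ, Fintype.card_fin]
            have := hqb n k
            have := hu0 n
            gcongr
        _ = _ := by rw [mul_assoc, ← mul_pow, hhalf]
    have hS : Summable (fun z : ι × ℕ => q z.1 z.2 fun _ => y) := by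
      refine Summable.of_norm_bounded
        (g := fun z : ι × ℕ => u z.1 * (1 / 2 : ℝ) ^ z.2) ?_ (fun z => hbd z.1 z.2)
      exact hu.mul_of_nonneg (summable_geometric_of_lt_one (by norm_num) (by norm_num)) hu0
        (fun k => by positivity)
    have hS' := hS.hasSum
    have h1 : HasSum (fun n => f n (p + y)) (∑' z : ι × ℕ, q z.1 z.2 fun _ => y) :=
      hS'.prod_fiberwise (fun n => hsum n y hy')
    rw [h1.tsum_eq]
    have hS2 : HasSum (fun z : ℕ × ι => q z.2 z.1 fun _ => y)
        (∑' z : ι × ℕ, q z.1 z.2 fun _ => y) :=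
      (Equiv.hasSum_iff (Equiv.prodComm ℕ ι)).2 hS'
    refine hS2.prod_fiberwise (fun k => ?_)
    have := (hqk k).hasSum
    exact this.mapL (ContinuousMultilinearMap.apply ℂ (fun _ : Fin k => E) ℂ (fun _ => y))

/-! ### Rational zeros of Bernoulli polynomials -/

/-- A weak form of von Staudt–Clausen: `p B_j` is `p`-integral. -/
lemma padicNorm_bernoulli_le (p : ℕ) [hp : Fact p.Prime] (j : ℕ) :
    padicNorm p (bernoulli j) ≤ p := by
  have hp1 : (1 : ℚ) ≤ p := by exact_mod_cast hp.1.one_le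
  have hinv : ∀ q : ℕ, padicNorm p (1 / (q : ℚ)) ≤ p ∨ ¬ q.Prime := by
    intro q
    by_cases hq : q.Prime
    · left
      rw [padicNorm.div, padicNorm.one]
      by_cases hqp : p = q
      · subst hqp
        rw [padicNorm.padicNorm_p_of_prime]; simp
      · have : Fact q.Prime := ⟨hq⟩
        rw [padicNorm.padicNorm_of_prime_of_ne hqp]; simpa using hp1
    · exact Or.inr hq
  rcases Nat.even_or_odd' j with ⟨k, rfl | rfl⟩
  · obtain ⟨T, hT⟩ := Bernoulli.vonStaudt_clausen k
    rw [eq_sub_of_add_eq hT.symm]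
    refine padicNorm.sub.trans (max_le ((padicNorm.of_int T).trans hp1) ?_)
    refine padicNorm.sum_le' (fun q hq => ?_) (by positivity)
    rcases hinv q with h | h
    · exact h
    · exact absurd (Finset.mem_filter.1 hq).2.1 h
  · rcases Nat.eq_zero_or_pos k with rfl | hk
    · rw [mul_zero, zero_add, bernoulli_one, neg_div, padicNorm.neg]
      rcases hinv 2 with h | h
      · exact_mod_cast h
      · exact absurd Nat.prime_two h
    · rw [bernoulli_eq_zero_of_odd ⟨k, rfl⟩ (by omega), padicNorm.zero]; positivity

/-- If `x` is not `p`-integral, the leading term `x ^ k` of `B_k(x)` dominates `p`-adically,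
provided it beats the term `k B_1 x ^ (k - 1)`. -/
lemma bernoulli_eval_ne_zero_of_padicNorm (p : ℕ) [hp : Fact p.Prime] (k : ℕ) (x : ℚ)
    (hx : (p : ℚ) ≤ padicNorm p x) (hk : padicNorm p (k / 2) < padicNorm p x) :
    (Polynomial.bernoulli k).eval x ≠ 0 := by
  rcases Nat.eq_zero_or_pos k with rfl | hk0
  · simp
  have hp1 : (1 : ℚ) < p := by exact_mod_cast hp.1.one_lt
  set X := padicNorm p x with hX
  have hX0 : 0 < X := by linarith
  intro h0
  have hsum : (Polynomial.bernoulli k).eval x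
      = ∑ j ∈ Finset.range (k + 1), bernoulli j * (k.choose j) * x ^ (k - j) := by
    rw [Polynomial.bernoulli, Polynomial.eval_finsetSum]
    simp [Polynomial.eval_monomial]
  rw [hsum, Finset.sum_range_succ'] at h0
  simp only [bernoulli_zero, Nat.choose_zero_right, Nat.cast_one, mul_one, one_mul,
    Nat.sub_zero] at h0
  have hxk : x ^ k = -∑ j ∈ Finset.range k,
      bernoulli (j + 1) * (k.choose (j + 1)) * x ^ (k - (j + 1)) := by linarith
  have hlt : padicNorm p (x ^ k) < X ^ k := by
    rw [hxk, padicNorm.neg]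
    refine padicNorm.sum_lt' (fun j hj => ?_) (by positivity)
    have hj' := Finset.mem_range.1 hj
    rw [padicNorm.mul, padicNorm.mul]
    have hpow : padicNorm p (x ^ (k - (j + 1))) = X ^ (k - (j + 1)) := by
      rw [hX]; exact map_pow (IsAbsoluteValue.toAbsoluteValue (padicNorm p)) x _
    rw [hpow]
    have hch : padicNorm p ((k.choose (j + 1) : ℕ) : ℚ) ≤ 1 := padicNorm.of_nat _
    rcases Nat.eq_zero_or_pos j with rfl | hj0
    · have : padicNorm p (bernoulli (0 + 1)) * padicNorm p ((k.choose (0 + 1) : ℕ) : ℚ)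
          = padicNorm p (k / 2) := by
        rw [← padicNorm.mul, zero_add, bernoulli_one, Nat.choose_one_right,
          show (-1 / 2 : ℚ) * k = -(k / 2) by ring, padicNorm.neg]
      rw [this, zero_add]
      calc padicNorm p (k / 2) * X ^ (k - 1) < X * X ^ (k - 1) := by gcongr
        _ = X ^ k := by rw [← pow_succ']; congr 1; omega
    · have h1 : X ^ k = X ^ 2 * X ^ (k - 2) := by rw [← pow_add]; congr 1; omega
      have h2 : X ^ (k - (j + 1)) ≤ X ^ (k - 2) :=
        pow_le_pow_right₀ (by linarith) (by omega)
      have h3 : (p : ℚ) < X ^ 2 := by nlinarith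
      calc padicNorm p (bernoulli (j + 1)) * padicNorm p ((k.choose (j + 1) : ℕ) : ℚ)
            * X ^ (k - (j + 1)) ≤ p * 1 * X ^ (k - 2) := by
            have := padicNorm_bernoulli_le p (j + 1)
            gcongr
            exact padicNorm.nonneg _
        _ < X ^ 2 * X ^ (k - 2) := by rw [mul_one]; gcongr
        _ = X ^ k := h1.symm
  rw [map_pow (IsAbsoluteValue.toAbsoluteValue (padicNorm p)) x k |> fun h =>
    (show padicNorm p (x ^ k) = X ^ k from h)] at hlt
  exact lt_irrefl _ hlt

lemma padicNorm_ge_of_dvd_den (p : ℕ) [hp : Fact p.Prime] (x : ℚ) (n : ℕ) (h : p ^ n ∣ x.den)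
    (hn : n ≠ 0) : (p : ℚ) ^ n ≤ padicNorm p x := by
  have hp1 : (1 : ℚ) < p := by exact_mod_cast hp.1.one_lt
  have hd : (x.den : ℚ) ≠ 0 := by exact_mod_cast x.den_nz
  have hnum : padicNorm p (x.num : ℚ) = 1 := by
    rw [padicNorm.int_eq_one_iff]
    intro hdiv
    have h1 : p ∣ x.num.natAbs := Int.natCast_dvd.1 hdiv
    have h2 : p ∣ x.den := (dvd_pow_self p hn).trans h
    have := Nat.dvd_gcd h1 h2
    rw [x.reduced] at this
    exact hp.1.one_lt.ne' (Nat.dvd_one.1 this)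
  have hden : padicNorm p (x.den : ℚ) ≤ (p : ℚ) ^ (-n : ℤ) := by
    have := (padicNorm.dvd_iff_norm_le (p := p) (n := n) (z := (x.den : ℤ))).1
      (by exact_mod_cast h)
    exact_mod_cast this
  have hpos : 0 < padicNorm p (x.den : ℚ) := lt_of_le_of_ne (padicNorm.nonneg _)
    (Ne.symm (padicNorm.nonzero hd))
  conv_rhs => rw [← Rat.num_div_den x]
  rw [padicNorm.div, hnum, le_div_iff₀ hpos]
  calc (p : ℚ) ^ n * padicNorm p (x.den : ℚ) ≤ (p : ℚ) ^ n * (p : ℚ) ^ (-n : ℤ) := by gcongr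
    _ = 1 := by rw [zpow_neg, zpow_natCast]; field_simp

lemma bernoulliFun_ratCast (k : ℕ) (q : ℚ) :
    bernoulliFun k (q : ℝ) = (((Polynomial.bernoulli k).eval q : ℚ) : ℝ) := by
  rw [bernoulliFun, Polynomial.eval_map_algebraMap, Polynomial.aeval_def,
    show (q : ℝ) = algebraMap ℚ ℝ q from rfl, Polynomial.eval₂_at_apply]
  rfl

lemma padicNorm_half_le_one (p : ℕ) [hp : Fact p.Prime] (k : ℕ) (h : p ≠ 2 ∨ Even k) :
    padicNorm p (k / 2) ≤ 1 := by
  rcases h with h | h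
  · rw [padicNorm.div, show (2 : ℚ) = ((2 : ℕ) : ℚ) by norm_num]
    have : Fact (Nat.Prime 2) := ⟨Nat.prime_two⟩
    rw [padicNorm.padicNorm_of_prime_of_ne h, div_one]
    exact padicNorm.of_nat _
  · obtain ⟨m, rfl⟩ := h
    rw [show ((m + m : ℕ) : ℚ) / 2 = (m : ℕ) by push_cast; ring]
    exact padicNorm.of_nat _

/-- Inkeri's theorem on `(-1, 1)`: the only rational zeros of Bernoulli polynomials there are
`0` and `1/2`. -/
lemma bernoulli_eval_ne_zero_of_rat (k : ℕ) (x : ℚ) (h1 : -1 < x) (h2 : x < 1) (h0 : x ≠ 0)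
    (hh : x ≠ 1 / 2) : (Polynomial.bernoulli k).eval x ≠ 0 := by
  have f2 : Fact (Nat.Prime 2) := ⟨Nat.prime_two⟩
  by_cases hodd : ∃ p, p.Prime ∧ p ≠ 2 ∧ p ∣ x.den
  · obtain ⟨p, hp, hp2, hd⟩ := hodd
    have : Fact p.Prime := ⟨hp⟩
    have h := padicNorm_ge_of_dvd_den p x 1 (by simpa using hd) one_ne_zero
    rw [pow_one] at h
    have hp1 : (1 : ℚ) < p := by exact_mod_cast hp.one_lt
    exact bernoulli_eval_ne_zero_of_padicNorm p k x h
      (lt_of_le_of_lt (padicNorm_half_le_one p k (Or.inl hp2)) (by linarith))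
  push Not at hodd
  by_cases h4 : 2 ^ 2 ∣ x.den
  · have h := padicNorm_ge_of_dvd_den 2 x 2 h4 two_ne_zero
    norm_num at h
    refine bernoulli_eval_ne_zero_of_padicNorm 2 k x (by norm_num; linarith) ?_
    have h5 : padicNorm 2 ((k : ℚ) / 2) ≤ 2 := by
      have h6 : padicNorm 2 (k : ℚ) ≤ 1 := padicNorm.of_nat _
      have h7 : padicNorm 2 (2 : ℚ) = 1 / 2 := by
        have := padicNorm.padicNorm_p_of_prime (p := 2)
        norm_num at this ⊢
        exact this
      rw [padicNorm.div, h7]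
      linarith
    linarith
  have hden : x.den = 1 ∨ x.den = 2 := by
    have h5 := Nat.eq_prime_pow_of_unique_prime_dvd (n := x.den) (p := 2) x.den_nz
      (fun {d} hd hdd => by
        by_contra hne
        exact hodd d hd hne hdd)
    rw [h5] at h4 ⊢
    rcases Nat.lt_or_ge (x.den.primeFactorsList.length) 2 with h | h
    · interval_cases x.den.primeFactorsList.length <;> simp
    · exact absurd (pow_dvd_pow 2 h) h4
  have hxnd : x = x.num / x.den := (Rat.num_div_den x).symm
  rcases hden with h | h
  · exfalso
    rw [h] at hxnd
    rw [hxnd] at h1 h2 h0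
    norm_num at h1 h2 h0
    have h1' : -1 < x.num := by exact_mod_cast h1
    have h2' : x.num < 1 := by exact_mod_cast h2
    apply h0
    have : x.num = 0 := by omega
    simpa using this
  · have hx : x = -1 / 2 := by
      rw [h] at hxnd
      have e : (x.num : ℚ) = x * 2 := by
        have := Rat.mul_den_eq_num x
        rw [h] at this
        exact this.symm
      have h1' : (-2 : ℚ) < x.num := by rw [e]; linarith
      have h2' : (x.num : ℚ) < 2 := by rw [e]; linarith
      have h1'' : -2 < x.num := by exact_mod_cast h1'
      have h2'' : x.num < 2 := by exact_mod_cast h2'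
      have : x.num = -1 ∨ x.num = 0 ∨ x.num = 1 := by omega
      rcases this with g | g | g <;> rw [g] at e <;> push_cast at e
      · linarith
      · exact absurd (by linarith) h0
      · exact absurd (by linarith) hh
    rcases Nat.even_or_odd k with hk | hk
    · have h6 := padicNorm_ge_of_dvd_den 2 x 1 (by rw [h]; norm_num) one_ne_zero
      norm_num at h6
      exact bernoulli_eval_ne_zero_of_padicNorm 2 k x (by norm_num; linarith)
        (lt_of_le_of_lt (padicNorm_half_le_one 2 k (Or.inr hk)) (by linarith))
    · have h7 := Polynomial.bernoulli_eval_one_add k x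
      have h8 := Polynomial.bernoulli_eval_one_sub k (1 + x)
      have e1 : (1 : ℚ) + x = 1 / 2 := by rw [hx]; norm_num
      have e2 : (1 : ℚ) - (1 + x) = 1 / 2 := by rw [hx]; norm_num
      rw [e2, e1, hk.neg_one_pow] at h8
      rw [e1] at h7
      have h9 : (Polynomial.bernoulli k).eval (1 / 2 : ℚ) = 0 := by linarith
      rw [h9] at h7
      intro h10
      rw [h10, zero_add] at h7
      have : (k : ℚ) ≠ 0 := by
        have := hk.pos
        positivity
      have hx0 : x ^ (k - 1) ≠ 0 := pow_ne_zero _ h0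
      exact mul_ne_zero this hx0 h7.symm

lemma bernoulli_even_ne_zero (k : ℕ) : bernoulli (2 * k) ≠ 0 := by
  rcases Nat.eq_zero_or_pos k with rfl | hk
  · simp
  intro h
  have hs := hasSum_zeta_nat hk.ne'
  rw [h] at hs
  simp only [Rat.cast_zero, mul_zero, zero_div] at hs
  have hpos : (0 : ℝ) < 1 / (1 : ℕ) ^ (2 * k) := by norm_num
  have := hs.summable.tsum_pos (fun n => by positivity) 1 hpos
  rw [hs.tsum_eq] at this
  exact lt_irrefl _ this

/-- For which indices a Bernoulli polynomial does not vanish at a rational `b ∈ (-1, 1)`. -/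
lemma bernoulliFun_ne_zero_iff (b : ℝ) (hb : |b| < 1) (hrat : ∃ q : ℚ, b = q) (k : ℕ) :
    bernoulliFun k b ≠ 0 ↔
      ((b = 0 ∧ (k = 1 ∨ Even k)) ∨ (b = 1 / 2 ∧ Even k) ∨ (b ≠ 0 ∧ b ≠ 1 / 2)) := by
  have hE : ∀ k, Even k → (bernoulli k : ℝ) ≠ 0 := by
    rintro k ⟨m, rfl⟩
    rw [← two_mul]
    exact_mod_cast bernoulli_even_ne_zero m
  by_cases h0 : b = 0
  · subst h0
    rw [bernoulliFun_eval_zero]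
    constructor
    · intro h
      refine Or.inl ⟨rfl, ?_⟩
      by_contra hc
      push Not at hc
      apply h
      have hk := Nat.not_even_iff_odd.1 hc.2
      rw [bernoulli_eq_zero_of_odd hk (by have := hk.pos; omega)]; simp
    · rintro (⟨-, rfl | h⟩ | ⟨h, -⟩ | ⟨h, -⟩)
      · rw [bernoulli_one]; norm_num
      · exact hE k h
      · norm_num at h
      · exact absurd rfl h
  by_cases hh : b = 1 / 2
  · subst hh
    rw [show (1 / 2 : ℝ) = 2⁻¹ by norm_num]
    constructor
    · intro h
      refine Or.inr (Or.inl ⟨rfl, ?_⟩)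
      by_contra hc
      obtain ⟨m, rfl⟩ := Nat.not_even_iff_odd.1 hc
      exact h (bernoulliFun_eval_half_eq_zero m)
    · intro h
      have hk : Even k := by
        rcases h with ⟨h, -⟩ | ⟨-, h⟩ | ⟨-, h⟩
        · norm_num at h
        · exact h
        · exact absurd rfl h
      rw [bernoulliFun_eval_half]
      refine mul_ne_zero ?_ (hE k hk)
      obtain ⟨m, rfl⟩ := hk
      rcases Nat.eq_zero_or_pos m with rfl | hm
      · norm_num
      · have : (2 : ℝ) ^ 2 ≤ 2 ^ (m + m) := pow_le_pow_right₀ (by norm_num) (by omega)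
        have h2 : (2 : ℝ) / 2 ^ (m + m) < 1 := by
          rw [div_lt_one (by positivity)]; linarith
        linarith
  · constructor
    · intro _; exact Or.inr (Or.inr ⟨h0, hh⟩)
    · intro _
      obtain ⟨q, rfl⟩ := hrat
      rw [bernoulliFun_ratCast]
      have := abs_lt.1 hb
      refine Rat.cast_ne_zero.2 (bernoulli_eval_ne_zero_of_rat k q ?_ ?_ ?_ ?_)
      · exact_mod_cast this.1
      · exact_mod_cast this.2
      · exact_mod_cast h0
      · intro h; apply hh; rw [h]; norm_num

/-- The Euler–Maclaurin coefficient `B_k(b) / k!`. -/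
noncomputable def bc (b : ℝ) (k : ℕ) : ℂ := ((bernoulliFun k b / k.factorial : ℝ) : ℂ)

lemma bc_zero (b : ℝ) : bc b 0 = 1 := by simp [bc]

lemma bc_ne_zero_iff (b : ℝ) (k : ℕ) : bc b k ≠ 0 ↔ bernoulliFun k b ≠ 0 := by
  have : (k.factorial : ℝ) ≠ 0 := by exact_mod_cast k.factorial_ne_zero
  rw [bc, Complex.ofReal_ne_zero, div_ne_zero_iff]
  simp [this]

/-- The identity `∑_{k ≤ n} B_k(b) / (k! (n+1-k)!) = b ^ n / n!`, i.e. the coefficient form of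
`(e ^ D - 1) ∑ B_k(b) D ^ k / k! = D e ^ {b D}`. -/
lemma sum_bc (b : ℝ) (n : ℕ) :
    ∑ k ∈ Finset.range (n + 1), bc b k / ((n + 1 - k).factorial : ℂ) = (b : ℂ) ^ n / n.factorial := by
  have h := congrArg (fun P => (Polynomial.map (algebraMap ℚ ℝ) P).eval b)
    (Polynomial.sum_bernoulli n)
  simp only [Polynomial.map_sum, Polynomial.eval_finsetSum, Polynomial.map_monomial,
    Polynomial.eval_monomial] at h
  have h' : ∑ k ∈ Finset.range (n + 1), ((n + 1).choose k : ℝ) * bernoulliFun k b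
      = (n + 1 : ℝ) * b ^ n := by
    rw [show ((n : ℝ) + 1) = algebraMap ℚ ℝ ((n : ℚ) + 1) by simp, ← h]
    refine Finset.sum_congr rfl (fun k _ => ?_)
    rw [bernoulliFun, Algebra.smul_def]
    simp
  have hn : ((n + 1).factorial : ℝ) ≠ 0 := by exact_mod_cast (n + 1).factorial_ne_zero
  have hR : ∑ k ∈ Finset.range (n + 1), bernoulliFun k b / k.factorial / ((n + 1 - k).factorial : ℝ)
      = b ^ n / n.factorial := by
    have : b ^ n / n.factorial = (∑ k ∈ Finset.range (n + 1),
        ((n + 1).choose k : ℝ) * bernoulliFun k b) / (n + 1).factorial := by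
      rw [h', Nat.factorial_succ]; push_cast
      have : (n : ℝ) + 1 ≠ 0 := by positivity
      have : (n.factorial : ℝ) ≠ 0 := by exact_mod_cast n.factorial_ne_zero
      field_simp
    rw [this, Finset.sum_div]
    refine Finset.sum_congr rfl (fun k hk => ?_)
    have hk' : k ≤ n + 1 := (Finset.mem_range.1 hk).le
    have h1 : ((n + 1).choose k : ℝ) * k.factorial * ((n + 1 - k).factorial) = (n + 1).factorial := by
      exact_mod_cast Nat.choose_mul_factorial_mul_factorial hk'
    have h2 : (k.factorial : ℝ) ≠ 0 := by exact_mod_cast k.factorial_ne_zero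
    have h3 : ((n + 1 - k).factorial : ℝ) ≠ 0 := by exact_mod_cast (n + 1 - k).factorial_ne_zero
    rw [← h1]
    have h4 : ((n + 1).choose k : ℝ) ≠ 0 := by
      exact_mod_cast (Nat.choose_pos hk').ne'
    field_simp
  have := congrArg (fun x : ℝ => (x : ℂ)) hR
  simp only [Complex.ofReal_sum, Complex.ofReal_div, Complex.ofReal_pow,
    Complex.ofReal_natCast] at this
  rw [← this]
  refine Finset.sum_congr rfl (fun k _ => ?_)
  rw [bc]; push_cast; rfl

/-! ### An Euler-Maclaurin type expansion -/

/-- The rising factorial `w (w + 1) ⋯ (w + k - 1)`. -/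
noncomputable def poch (w : ℂ) (k : ℕ) : ℂ := ∏ j ∈ Finset.range k, (w + j)

lemma poch_zero (w : ℂ) : poch w 0 = 1 := by simp [poch]

lemma poch_add (w : ℂ) (k j : ℕ) : poch w (k + j) = poch w k * poch (w + k) j := by
  simp only [poch, Finset.prod_range_add]
  congr 1
  exact Finset.prod_congr rfl fun i _ => by push_cast; ring

lemma poch_one (w : ℂ) : poch w 1 = w := by simp [poch]

lemma poch_succ' (w : ℂ) (k : ℕ) : poch w (k + 1) = w * poch (w + 1) k := by
  rw [add_comm, poch_add, poch_one]; simp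

lemma norm_poch_le (w : ℂ) (k : ℕ) {M : ℝ} (hw : ‖w‖ ≤ M) : ‖poch w k‖ ≤ (M + k) ^ k := by
  rw [poch, norm_prod]
  calc ∏ j ∈ Finset.range k, ‖w + j‖ ≤ ∏ j ∈ Finset.range k, (M + k) := by
        refine Finset.prod_le_prod (fun _ _ => norm_nonneg _) fun j hj => ?_
        have h1 : ‖w + j‖ ≤ ‖w‖ + ‖(j : ℂ)‖ := norm_add_le _ _
        rw [Complex.norm_natCast] at h1
        have h2 : (j : ℝ) ≤ k := by exact_mod_cast (Finset.mem_range.1 hj).le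
        linarith
    _ = _ := by simp

lemma rpowC_ne_zero (x : ℝ) (z : ℂ) : rpowC x z ≠ 0 := Complex.exp_ne_zero _

lemma rpowC_add (x : ℝ) (z z' : ℂ) : rpowC x (z + z') = rpowC x z * rpowC x z' := by
  rw [rpowC, rpowC, rpowC, ← Complex.exp_add]; congr 1; ring

lemma rpowC_mul {x y : ℝ} (hx : 0 < x) (hy : 0 < y) (z : ℂ) :
    rpowC (x * y) z = rpowC x z * rpowC y z := by
  rw [rpowC, rpowC, rpowC, ← Complex.exp_add, Real.log_mul hx.ne' hy.ne']
  congr 1; push_cast; ring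

lemma rpowC_neg_natCast {x : ℝ} (hx : 0 < x) (k : ℕ) : rpowC x (-k) = ((x : ℂ)⁻¹) ^ k := by
  rw [rpowC, neg_mul, Complex.exp_neg, Complex.exp_nat_mul, ← Complex.ofReal_exp,
    Real.exp_log hx, inv_pow]

lemma norm_rpowC {x : ℝ} (hx : 0 < x) (z : ℂ) : ‖rpowC x z‖ = x ^ z.re := by
  rw [rpowC, Complex.norm_exp, Real.rpow_def_of_pos hx]
  congr 1
  simp [mul_comm]

lemma rpowC_eq_cpow {x : ℝ} (hx : 0 < x) (z : ℂ) : rpowC x z = (x : ℂ) ^ z := by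
  rw [rpowC, Complex.cpow_def_of_ne_zero (by exact_mod_cast hx.ne'), Complex.ofReal_log hx.le,
    mul_comm]

/-- Taylor's formula for `z ↦ (1 - z) ^ (-a)`, uniformly for `a` in a disc. -/
lemma norm_rpowC_one_sub_sub_le (J : ℕ) : ∀ M : ℝ, ∃ C : ℝ, 0 ≤ C ∧ ∀ a : ℂ, ‖a‖ ≤ M →
    ∀ z : ℝ, |z| ≤ 1 / 2 →
    ‖rpowC (1 - z) (-a) - ∑ j ∈ Finset.range J, poch a j / (j.factorial : ℂ) * (z : ℂ) ^ j‖
      ≤ C * |z| ^ J := by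
  induction J with
  | zero =>
    intro M
    refine ⟨Real.exp M, (Real.exp_pos _).le, fun a ha z hz => ?_⟩
    obtain ⟨h1, h2⟩ := abs_le.1 hz
    have hpos : (0 : ℝ) < 1 - z := by linarith
    simp only [Finset.range_zero, Finset.sum_empty, sub_zero, pow_zero, mul_one]
    rw [norm_rpowC hpos, Real.rpow_def_of_pos hpos]
    refine Real.exp_le_exp.2 ?_
    have hl1 : Real.log (1 - z) ≤ 1 := by
      have := Real.log_le_sub_one_of_pos hpos
      linarith
    have hl2 : -1 ≤ Real.log (1 - z) := by
      have := Real.one_sub_inv_le_log_of_pos hpos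
      have : (1 - z)⁻¹ ≤ 2 := by
        rw [inv_le_comm₀ hpos (by norm_num)]; linarith
      linarith
    have hl : |Real.log (1 - z)| ≤ 1 := abs_le.2 ⟨hl2, hl1⟩
    have hre : |(-a).re| ≤ M := (Complex.abs_re_le_norm _).trans (by simpa using ha)
    calc Real.log (1 - z) * (-a).re ≤ |Real.log (1 - z) * (-a).re| := le_abs_self _
      _ = |Real.log (1 - z)| * |(-a).re| := abs_mul _ _
      _ ≤ 1 * M := by gcongr
      _ = M := one_mul _
  | succ J ih =>
    intro M
    obtain ⟨C, hC, h⟩ := ih (M + 1)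
    refine ⟨|M| * C, by positivity, fun a ha z hz => ?_⟩
    set R : ℝ → ℂ := fun z => rpowC (1 - z) (-a) -
      ∑ j ∈ Finset.range (J + 1), poch a j / (j.factorial : ℂ) * (z : ℂ) ^ j with hR
    have hder : ∀ x ∈ Set.Icc (-|z|) |z|, HasDerivWithinAt R
        (a * (rpowC (1 - x) (-(a + 1)) -
          ∑ j ∈ Finset.range J, poch (a + 1) j / (j.factorial : ℂ) * (x : ℂ) ^ j))
        (Set.Icc (-|z|) |z|) x := by
      intro x hx
      refine HasDerivAt.hasDerivWithinAt ?_
      have hxpos : (0 : ℝ) < 1 - x := by linarith [hx.2]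
      rw [hR, mul_sub]
      refine HasDerivAt.sub ?_ ?_
      · have h1 : HasDerivAt (fun y : ℝ => Real.log (1 - y)) (-1 / (1 - x)) x :=
          ((hasDerivAt_id x).const_sub 1).log hxpos.ne'
        have h2 := ((h1.ofReal_comp).const_mul (-a)).cexp
        refine HasDerivAt.congr_deriv h2 ?_
        have h3 : rpowC (1 - x) (-(a + 1)) = rpowC (1 - x) (-a) * ((1 - x : ℝ) : ℂ)⁻¹ := by
          rw [neg_add, rpowC_add]
          congr 1
          simpa using rpowC_neg_natCast hxpos 1
        rw [h3, rpowC]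
        push_cast
        ring
      · have h1 : HasDerivAt (fun y : ℝ => ∑ j ∈ Finset.range (J + 1),
            poch a j / (j.factorial : ℂ) * (y : ℂ) ^ j)
            (∑ j ∈ Finset.range (J + 1), poch a j / (j.factorial : ℂ) *
              ((j : ℂ) * (x : ℂ) ^ (j - 1) * 1)) x := by
          refine HasDerivAt.fun_sum fun j _ => HasDerivAt.const_mul _ ?_
          exact HasDerivAt.pow (Complex.ofRealCLM.hasDerivAt (x := x)) j
        refine HasDerivAt.congr_deriv h1 ?_
        rw [Finset.sum_range_succ', Finset.mul_sum]
        simp only [Nat.cast_zero, zero_mul, mul_zero, add_zero, add_tsub_cancel_right]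
        refine Finset.sum_congr rfl fun j _ => ?_
        rw [poch_succ', Nat.factorial_succ]
        have h2 : (j.factorial : ℂ) ≠ 0 := by exact_mod_cast j.factorial_ne_zero
        have h3 : ((j : ℂ) + 1) ≠ 0 := by exact_mod_cast j.succ_ne_zero
        push_cast
        field_simp
    have hbd : ∀ x ∈ Set.Icc (-|z|) |z|, ‖a * (rpowC (1 - x) (-(a + 1)) -
          ∑ j ∈ Finset.range J, poch (a + 1) j / (j.factorial : ℂ) * (x : ℂ) ^ j)‖
          ≤ |M| * (C * |z| ^ J) := by
      intro x hx
      have hx' : |x| ≤ |z| := abs_le.2 hx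
      rw [norm_mul]
      have h1 := h (a + 1) ((norm_add_le _ _).trans (by simpa using ha)) x (hx'.trans hz)
      have h2 : C * |x| ^ J ≤ C * |z| ^ J := by gcongr
      exact mul_le_mul (ha.trans (le_abs_self M)) (h1.trans h2) (norm_nonneg _) (abs_nonneg _)
    have := Convex.norm_image_sub_le_of_norm_hasDerivWithin_le hder hbd (convex_Icc _ _)
      (show (0 : ℝ) ∈ Set.Icc (-|z|) |z| by simp) (show z ∈ Set.Icc (-|z|) |z| from
        ⟨neg_abs_le z, le_abs_self z⟩)
    have hR0 : R 0 = 0 := by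
      simp only [hR]
      rw [Finset.sum_range_succ']
      simp [rpowC, poch_zero]
    rw [hR0, sub_zero, sub_zero, Real.norm_eq_abs] at this
    calc _ ≤ _ := this
      _ = _ := by rw [pow_succ]; ring

/-- Error of the Euler-Maclaurin type expansion of `-w (X - b) ^ (-w - 1)` as a combination of the
differences `(X - 1) ^ (-w - k) - X ^ (-w - k)` with Bernoulli polynomial coefficients. -/
noncomputable def emErr (b : ℝ) (N : ℕ) (w : ℂ) (X : ℝ) : ℂ :=
  ∑ k ∈ Finset.range N, bc b k * poch w k * (rpowC (X - 1) (-(w + k)) - rpowC X (-(w + k)))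
    - w * rpowC (X - b) (-(w + 1))

/-- Cancellation of the Taylor polynomials in the Euler-Maclaurin type expansion. -/
lemma emErr_cancel (b : ℝ) (N : ℕ) (w y : ℂ) :
    ∑ k ∈ Finset.range N, bc b k * poch w k * y ^ k *
      (∑ j ∈ Finset.range (N + 1 - k), poch (w + k) j / (j.factorial : ℂ) * y ^ j - 1)
    = w * y * ∑ j ∈ Finset.range N, poch (w + 1) j / (j.factorial : ℂ) * (b * y) ^ j := by
  have h1 : ∀ k ∈ Finset.range N, bc b k * poch w k * y ^ k *
      (∑ j ∈ Finset.range (N + 1 - k), poch (w + k) j / (j.factorial : ℂ) * y ^ j - 1)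
      = ∑ n ∈ Finset.Ico k N, poch w (n + 1) * y ^ (n + 1) *
        (bc b k / ((n + 1 - k).factorial : ℂ)) := by
    intro k hk
    have hk' := Finset.mem_range.1 hk
    rw [Finset.sum_Ico_eq_sum_range, show N + 1 - k = (N - k) + 1 by omega,
      Finset.sum_range_succ']
    simp only [poch_zero, Nat.factorial_zero, Nat.cast_one, div_one, pow_zero, mul_one,
      add_sub_cancel_right]
    rw [Finset.mul_sum]
    refine Finset.sum_congr rfl fun i _ => ?_
    rw [show k + i + 1 = k + (i + 1) by ring, poch_add w k (i + 1), pow_add,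
      show k + (i + 1) - k = i + 1 by omega]
    ring
  rw [Finset.sum_congr rfl h1]
  have h2 : ∑ k ∈ Finset.range N, ∑ n ∈ Finset.Ico k N, poch w (n + 1) * y ^ (n + 1) *
        (bc b k / ((n + 1 - k).factorial : ℂ))
      = ∑ n ∈ Finset.range N, ∑ k ∈ Finset.range (n + 1), poch w (n + 1) * y ^ (n + 1) *
        (bc b k / ((n + 1 - k).factorial : ℂ)) := by
    refine Finset.sum_comm' fun k n => ?_
    simp only [Finset.mem_range, Finset.mem_Ico]
    omega
  rw [h2, Finset.mul_sum]
  refine Finset.sum_congr rfl fun n _ => ?_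
  rw [← Finset.mul_sum, sum_bc, poch_succ', mul_pow, pow_succ]
  ring

/-- The error is `O(X ^ (-w - N - 1))`: expanding everything in powers of `X⁻¹`, all terms of lower
order cancel by the identity for the Bernoulli polynomials. -/
lemma norm_emErr_le (b : ℝ) (hb : |b| ≤ 1) (N : ℕ) (M : ℝ) : ∃ C : ℝ, 0 ≤ C ∧
    ∀ w : ℂ, ‖w‖ ≤ M → ∀ X : ℝ, 2 ≤ X → ‖emErr b N w X‖ ≤ C * X ^ (-(w.re + N + 1)) := by
  choose! C hC hCb using norm_rpowC_one_sub_sub_le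
  refine ⟨∑ k ∈ Finset.range N, ‖bc b k‖ * (|M| + k) ^ k * C (N + 1 - k) (|M| + k)
    + |M| * C N (|M| + 1), ?_, ?_⟩
  · refine add_nonneg (Finset.sum_nonneg fun k _ => mul_nonneg (by positivity) (hC _ _))
      (mul_nonneg (abs_nonneg _) (hC _ _))
  intro w hw X hX
  have hw' : ‖w‖ ≤ |M| := hw.trans (le_abs_self M)
  have hX0 : (0 : ℝ) < X := by linarith
  set y : ℝ := X⁻¹ with hy
  have hy0 : 0 < y := inv_pos.2 hX0
  have hy2 : y ≤ 1 / 2 := by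
    rw [hy, one_div]; exact inv_anti₀ (by norm_num) hX
  have hby : |b * y| ≤ y := by
    rw [abs_mul, abs_of_pos hy0]
    nlinarith
  have hby' := abs_le.1 (hby.trans hy2)
  have hXy : X * y = 1 := mul_inv_cancel₀ hX0.ne'
  have e1 : X - 1 = X * (1 - y) := by rw [mul_sub, hXy]; ring
  have e2 : X - b = X * (1 - b * y) := by rw [mul_sub, mul_left_comm, hXy]; ring
  have hyc : ((y : ℝ) : ℂ) = (X : ℂ)⁻¹ := by rw [hy]; push_cast; rfl
  have e3 : ∀ k : ℕ, rpowC X (-(w + k)) = rpowC X (-w) * (y : ℂ) ^ k := by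
    intro k
    rw [neg_add, rpowC_add, rpowC_neg_natCast hX0, hyc]
  set R : ℕ → ℂ → ℝ → ℂ := fun J a z => rpowC (1 - z) (-a) -
    ∑ j ∈ Finset.range J, poch a j / (j.factorial : ℂ) * (z : ℂ) ^ j with hR
  have key : emErr b N w X = rpowC X (-w) * (∑ k ∈ Finset.range N, bc b k * poch w k *
      (y : ℂ) ^ k * R (N + 1 - k) (w + k) y - w * y * R N (w + 1) (b * y)) := by
    have hc := emErr_cancel b N w y
    have h1 : emErr b N w X = rpowC X (-w) * (∑ k ∈ Finset.range N, bc b k * poch w k *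
      (y : ℂ) ^ k * (rpowC (1 - y) (-(w + k)) - 1) - w * y * rpowC (1 - b * y) (-(w + 1))) := by
      rw [emErr, mul_sub, Finset.mul_sum]
      congr 1
      · refine Finset.sum_congr rfl fun k _ => ?_
        rw [e1, rpowC_mul hX0 (by linarith), e3]
        ring
      · rw [e2, rpowC_mul hX0 (by linarith [hby'.2])]
        have := e3 1
        rw [Nat.cast_one, pow_one] at this
        rw [this]; ring
    rw [h1]
    congr 1
    have h2 : ∀ k, R (N + 1 - k) (w + k) y = (rpowC (1 - y) (-(w + k)) - 1) -
        (∑ j ∈ Finset.range (N + 1 - k), poch (w + k) j / (j.factorial : ℂ) * (y : ℂ) ^ j - 1) := by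
      intro k; simp only [hR]; ring
    simp only [h2, mul_sub (_ * (y : ℂ) ^ _), Finset.sum_sub_distrib] at hc ⊢
    simp only [hR]
    push_cast
    rw [mul_sub (w * y), ← hc]
    ring
  rw [key, norm_mul, norm_rpowC hX0]
  have hXN : X ^ (-(w.re + N + 1)) = X ^ (-w).re * y ^ (N + 1) := by
    rw [show -(w.re + N + 1) = (-w).re - ((N + 1 : ℕ) : ℝ) by push_cast; simp; ring,
      Real.rpow_sub hX0, Real.rpow_natCast, hy, inv_pow, div_eq_mul_inv]
  rw [hXN, mul_left_comm]
  refine mul_le_mul_of_nonneg_left ?_ (Real.rpow_nonneg hX0.le _)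
  rw [add_mul, Finset.sum_mul]
  refine (norm_sub_le _ _).trans (add_le_add ?_ ?_)
  · refine (norm_sum_le _ _).trans (Finset.sum_le_sum fun k hk => ?_)
    have hk' := Finset.mem_range.1 hk
    have h1 := hCb (N + 1 - k) (|M| + k) (w + k) ((norm_add_le _ _).trans (by
      rw [Complex.norm_natCast]; linarith)) y (by rwa [abs_of_pos hy0])
    rw [abs_of_pos hy0] at h1
    have h2 := norm_poch_le w k hw'
    have hC' := hC (N + 1 - k) (|M| + k)
    simp only [norm_mul, norm_pow, Complex.norm_real, Real.norm_eq_abs, abs_of_pos hy0]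
    calc ‖bc b k‖ * ‖poch w k‖ * y ^ k * ‖R (N + 1 - k) (w + k) y‖
        ≤ ‖bc b k‖ * (|M| + k) ^ k * y ^ k * (C (N + 1 - k) (|M| + k) * y ^ (N + 1 - k)) := by
          gcongr
      _ = ‖bc b k‖ * (|M| + k) ^ k * C (N + 1 - k) (|M| + k) * (y ^ k * y ^ (N + 1 - k)) := by ring
      _ = _ := by rw [← pow_add, show k + (N + 1 - k) = N + 1 by omega]
  · have h1 := hCb N (|M| + 1) (w + 1) ((norm_add_le _ _).trans (by simpa using hw')) (b * y)
      (hby.trans hy2)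
    have hC' := hC N (|M| + 1)
    simp only [norm_mul, Complex.norm_real, Real.norm_eq_abs, abs_of_pos hy0]
    calc ‖w‖ * y * ‖R N (w + 1) (b * y)‖ ≤ |M| * y * (C N (|M| + 1) * y ^ N) := by
          gcongr
          exact h1.trans (by gcongr)
      _ = _ := by ring

/-! ### Convergence of series over decreasing tuples -/

/-- The partial sum `s_0 + ⋯ + s_i`. -/
def ps {R : Type*} [AddCommMonoid R] {r : ℕ} (s : Fin r → R) (i : Fin r) : R :=
  ∑ j ∈ Finset.Iic i, s j

lemma ps_eq {R : Type*} [AddCommMonoid R] {r : ℕ} (s : Fin r → R) (i : Fin r) :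
    ps s i = ∑ j, if j ≤ i then s j else 0 := by
  rw [ps, ← Finset.sum_filter]
  congr 1
  ext j; simp

lemma ps_succ {R : Type*} [AddCommMonoid R] {r : ℕ} (s : Fin (r + 1) → R) (i : Fin r) :
    ps s i.succ = s 0 + ps (Fin.tail s) i := by
  simp [ps_eq, Fin.sum_univ_succ, Fin.tail]

lemma ps_zero {R : Type*} [AddCommMonoid R] {r : ℕ} (s : Fin (r + 1) → R) :
    ps s 0 = s 0 := by
  simp [ps_eq]

lemma ps_castSucc {R : Type*} [AddCommMonoid R] {r : ℕ} (s : Fin (r + 1) → R) (i : Fin r) :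
    ps s i.castSucc = ps (fun j : Fin r => s j.castSucc) i := by
  simp [ps_eq, Fin.sum_univ_castSucc]

lemma ps_last {R : Type*} [AddCommMonoid R] {r : ℕ} (s : Fin (r + 1) → R) :
    ps s (Fin.last r) = ∑ j : Fin r, s j.castSucc + s (Fin.last r) := by
  simp [ps_eq, Fin.sum_univ_castSucc, Fin.le_last]

lemma ps_add {R : Type*} [AddCommMonoid R] {r : ℕ} (s t : Fin r → R) (i : Fin r) :
    ps (fun j => s j + t j) i = ps s i + ps t i := by
  simp [ps, Finset.sum_add_distrib]

lemma ps_const {r : ℕ} (c : ℝ) (i : Fin r) : ps (fun _ => c) i = ((i : ℕ) + 1 : ℝ) * c := by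
  simp [ps]

lemma re_ps {r : ℕ} (s : Fin r → ℂ) (i : Fin r) : (ps s i).re = ps (fun j => (s j).re) i := by
  simp [ps]

/-- Abel summation. -/
lemma sum_mul_nonneg_of_ps_nonneg : ∀ (r : ℕ) (τ L : Fin r → ℝ), Antitone L → (∀ i, 0 ≤ L i) →
    (∀ i, 0 ≤ ps τ i) → 0 ≤ ∑ i, τ i * L i := by
  intro r
  induction r with
  | zero => intros; simp
  | succ r ih =>
    intro τ L hL hL0 hτ
    have h1 := ih (fun i => τ i.castSucc) (fun i => L i.castSucc - L (Fin.last r))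
      (fun i j hij => sub_le_sub_right (hL (by simpa using hij)) _)
      (fun i => sub_nonneg.2 (hL (Fin.le_last _)))
      (fun i => by rw [← ps_castSucc]; exact hτ _)
    have h2 := mul_nonneg (hτ (Fin.last r)) (hL0 (Fin.last r))
    rw [ps_last, add_mul, Finset.sum_mul] at h2
    rw [Fin.sum_univ_castSucc]
    simp only [mul_sub, Finset.sum_sub_distrib] at h1
    linarith

lemma summable_prod_rpow (r : ℕ) {c : ℝ} (hc : 1 < c) :
    Summable fun n : Fin r → ℕ => ∏ i, (n i : ℝ) ^ (-c) := by
  induction r with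
  | zero => exact Summable.of_finite
  | succ r ih =>
    rw [← (Fin.consEquiv (fun _ => ℕ)).summable_iff]
    have h1 : Summable fun n : ℕ => (n : ℝ) ^ (-c) := Real.summable_nat_rpow.2 (by linarith)
    have := h1.mul_of_nonneg ih (fun n => by positivity) (fun n => by positivity)
    refine this.congr fun x => ?_
    simp [Fin.consEquiv, Fin.prod_univ_succ]

/-- Adding shifts from `[0, 1)` to a strictly decreasing tuple of integers leaves it decreasing. -/
lemma dtuple_add_antitone {r : ℕ} {be : Fin r → ℝ} (hbe : ∀ i, be i ∈ Set.Ico (0 : ℝ) 1)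
    (n : DTuple r) : Antitone fun i => (n.1 i : ℝ) + be i := by
  intro i j hij
  rcases hij.eq_or_lt with rfl | h
  · exact le_rfl
  have h1 : (n.1 j : ℝ) + 1 ≤ n.1 i := by exact_mod_cast n.2.1 h
  have := (hbe i).1
  have := (hbe j).2
  simp only
  linarith

lemma dtuple_one_le {r : ℕ} (n : DTuple r) (i : Fin r) : (1 : ℝ) ≤ n.1 i := by
  exact_mod_cast n.2.2 i

/-- Absolute convergence of the multiple Hurwitz series at real exponents: by Abel summation it is
dominated by the series with all exponents equal to some `1 + ε`. -/
lemma summable_dtuple {r : ℕ} {be : Fin r → ℝ} (hbe : ∀ i, be i ∈ Set.Ico (0 : ℝ) 1)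
    (σ : Fin r → ℝ) (hσ : ∀ i : Fin r, ((i : ℕ) + 1 : ℝ) < ps σ i) :
    Summable fun n : DTuple r => ∏ i, ((n.1 i : ℝ) + be i) ^ (-σ i) := by
  have hev : ∀ᶠ ε in nhdsWithin (0 : ℝ) (Set.Ioi 0), ∀ i : Fin r,
      ((i : ℕ) + 1 : ℝ) * (1 + ε) < ps σ i := by
    refine Filter.eventually_all.2 fun i => nhdsWithin_le_nhds ?_
    have : Filter.Tendsto (fun ε : ℝ => ((i : ℕ) + 1 : ℝ) * (1 + ε)) (nhds 0)
        (nhds (((i : ℕ) + 1 : ℝ) * (1 + 0))) := by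
      apply Continuous.tendsto; fun_prop
    exact this.eventually_lt_const (by simpa using hσ i)
  obtain ⟨ε, hε, hε0⟩ := (hev.and self_mem_nhdsWithin).exists
  have hε0' : 0 < ε := hε0
  have hs := (summable_prod_rpow r (c := 1 + ε) (by linarith)).comp_injective
    (i := fun n : DTuple r => n.1) Subtype.val_injective
  refine Summable.of_nonneg_of_le (fun n => ?_) (fun n => ?_) hs
  · exact Finset.prod_nonneg fun i _ => Real.rpow_nonneg (by
      have := (hbe i).1; positivity) _
  have hX1 : ∀ i, 1 ≤ (n.1 i : ℝ) + be i := fun i => by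
    have := (hbe i).1
    have := dtuple_one_le n i
    linarith
  have hL : Antitone fun i => Real.log ((n.1 i : ℝ) + be i) := fun i j hij =>
    Real.log_le_log (by linarith [hX1 j]) (dtuple_add_antitone hbe n hij)
  have h1 := sum_mul_nonneg_of_ps_nonneg r (fun i => σ i + -(1 + ε)) _ hL
    (fun i => Real.log_nonneg (hX1 i)) (fun i => by
      rw [ps_add, ps_const]
      linarith [hε i])
  have h2 : ∏ i, ((n.1 i : ℝ) + be i) ^ (-(σ i + -(1 + ε))) ≤ 1 := by
    have : ∏ i, ((n.1 i : ℝ) + be i) ^ (-(σ i + -(1 + ε))) =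
        Real.exp (-∑ i, (σ i + -(1 + ε)) * Real.log ((n.1 i : ℝ) + be i)) := by
      rw [← Finset.sum_neg_distrib, Real.exp_sum]
      refine Finset.prod_congr rfl fun i _ => ?_
      rw [Real.rpow_def_of_pos (by linarith [hX1 i])]
      congr 1; ring
    rw [this]
    exact Real.exp_le_one_iff.2 (by linarith)
  calc ∏ i, ((n.1 i : ℝ) + be i) ^ (-σ i)
      = (∏ i, ((n.1 i : ℝ) + be i) ^ (-(σ i + -(1 + ε)))) *
        ∏ i, ((n.1 i : ℝ) + be i) ^ (-(1 + ε)) := by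
        rw [← Finset.prod_mul_distrib]
        refine Finset.prod_congr rfl fun i _ => ?_
        rw [← Real.rpow_add (by linarith [hX1 i])]
        congr 1; ring
    _ ≤ 1 * ∏ i, (n.1 i : ℝ) ^ (-(1 + ε)) := by
        refine mul_le_mul h2 ?_ ?_ zero_le_one
        · refine Finset.prod_le_prod (fun i _ => Real.rpow_nonneg (by linarith [hX1 i]) _)
            fun i _ => ?_
          refine Real.rpow_le_rpow_of_nonpos (by linarith [dtuple_one_le n i]) ?_ (by linarith)
          linarith [(hbe i).1]
        · exact Finset.prod_nonneg fun i _ => Real.rpow_nonneg (by linarith [hX1 i]) _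
    _ = _ := one_mul _

/-- Locally uniform summation over decreasing tuples: the exponents of the majorant are `s + c`,
in the domain of absolute convergence at `p`. -/
lemma analyticAt_tsum_dtuple {r : ℕ} {be : Fin r → ℝ} (hbe : ∀ i, be i ∈ Set.Ico (0 : ℝ) 1)
    (c : Fin r → ℝ) {p : Fin r → ℂ}
    (hp : ∀ i : Fin r, ((i : ℕ) + 1 : ℝ) < ps (fun j => (p j).re + c j) i)
    {g : DTuple r → (Fin r → ℂ) → ℂ} (hg : ∀ n s, AnalyticAt ℂ (g n) s) {C : ℝ}
    (hb : ∀ n, ∀ s ∈ Metric.ball p 1,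
      ‖g n s‖ ≤ C * ∏ i, ((n.1 i : ℝ) + be i) ^ (-((s i).re + c i))) :
    AnalyticAt ℂ (fun s => ∑' n, g n s) p ∧ Summable fun n => g n p := by
  have hev : ∀ᶠ ε in nhdsWithin (0 : ℝ) (Set.Ioi 0), ∀ i : Fin r,
      ((i : ℕ) + 1 : ℝ) < ps (fun j => ((p j).re + c j) + -ε) i := by
    refine Filter.eventually_all.2 fun i => nhdsWithin_le_nhds ?_
    have : Filter.Tendsto (fun ε : ℝ => ps (fun j => ((p j).re + c j) + -ε) i) (nhds 0)
        (nhds (ps (fun j => ((p j).re + c j) + -0) i)) := by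
      simp only [ps_add, ps_const]
      apply Continuous.tendsto; fun_prop
    exact this.eventually_const_lt (by simpa using hp i)
  have hev1 : ∀ᶠ ε in nhdsWithin (0 : ℝ) (Set.Ioi 0), ε < 1 :=
    nhdsWithin_le_nhds (eventually_lt_nhds zero_lt_one)
  obtain ⟨ε, ⟨hε, hε1⟩, hε0⟩ := ((hev.and hev1).and self_mem_nhdsWithin).exists
  have hε0' : 0 < ε := hε0
  have hs := (summable_dtuple hbe _ hε).mul_left |C|
  have hbd : ∀ n, ∀ s ∈ Metric.ball p ε,
      ‖g n s‖ ≤ |C| * ∏ i, ((n.1 i : ℝ) + be i) ^ (-((p i).re + c i + -ε)) := by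
    intro n s hs
    have hX1 : ∀ i, 1 ≤ (n.1 i : ℝ) + be i := fun i => by
      have := (hbe i).1
      have := dtuple_one_le n i
      linarith
    refine (hb n s (Metric.ball_subset_ball hε1.le hs)).trans ?_
    have h0 : 0 ≤ ∏ i, ((n.1 i : ℝ) + be i) ^ (-((s i).re + c i)) :=
      Finset.prod_nonneg fun i _ => Real.rpow_nonneg (by linarith [hX1 i]) _
    refine mul_le_mul (le_abs_self C) ?_ h0 (abs_nonneg _)
    refine Finset.prod_le_prod (fun i _ => Real.rpow_nonneg (by linarith [hX1 i]) _) fun i _ => ?_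
    refine Real.rpow_le_rpow_of_exponent_le (hX1 i) ?_
    have h1 : |(s i - p i).re| ≤ ε := by
      refine (Complex.abs_re_le_norm _).trans ((norm_le_pi_norm (s - p) i).trans ?_)
      rw [← dist_eq_norm]; exact (Metric.mem_ball.1 hs).le
    have h2 := (abs_le.1 h1).1
    rw [Complex.sub_re] at h2
    linarith
  exact ⟨analyticAt_tsum hε0' (fun n s _ => hg n s) hbd hs,
    Summable.of_norm_bounded hs (fun n => hbd n p (Metric.mem_ball_self hε0'))⟩

lemma analyticAt_rpowC (x : ℝ) (z : ℂ) : AnalyticAt ℂ (rpowC x) z := by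
  unfold rpowC; fun_prop

lemma analyticAt_rpowC_comp {E : Type*} [NormedAddCommGroup E] [NormedSpace ℂ E] (x : ℝ)
    {f : E → ℂ} {p : E} (hf : AnalyticAt ℂ f p) : AnalyticAt ℂ (fun s => rpowC x (f s)) p := by
  unfold rpowC; fun_prop

lemma analyticAt_coord {r : ℕ} (i : Fin r) (p : Fin r → ℂ) :
    AnalyticAt ℂ (fun s : Fin r → ℂ => s i) p :=
  (ContinuousLinearMap.proj (R := ℂ) (φ := fun _ : Fin r => ℂ) i).analyticAt p

lemma mem_Ur {r : ℕ} {m : ℤ} {s : Fin r → ℂ} :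
    s ∈ Ur r m ↔ ∀ i : Fin r, ((i : ℕ) + 1 - m : ℝ) < (ps s i).re := Iff.rfl

lemma norm_hzTerm {r : ℕ} {al : Fin r → ℝ} (hal : ∀ i, al i ∈ Set.Ico (0 : ℝ) 1)
    (s : Fin r → ℂ) (n : DTuple r) :
    ‖hzTerm al s n.1‖ = ∏ i, ((n.1 i : ℝ) + al i) ^ (-(s i).re) := by
  rw [hzTerm, norm_prod]
  refine Finset.prod_congr rfl fun i _ => ?_
  have := (hal i).1
  have := dtuple_one_le n i
  rw [norm_rpowC (by linarith), Complex.neg_re]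

lemma multipleHurwitz_analyticAt {r : ℕ} {al : Fin r → ℝ} (hal : ∀ i, al i ∈ Set.Ico (0 : ℝ) 1)
    {s : Fin r → ℂ} (hs : s ∈ Ur r 0) :
    AnalyticAt ℂ (multipleHurwitz al) s ∧ Summable fun n : DTuple r => hzTerm al s n.1 := by
  refine analyticAt_tsum_dtuple (g := fun n s => hzTerm al s n.1) hal (fun _ => 0) (C := 1)
    ?_ ?_ ?_
  · intro i
    have := mem_Ur.1 hs i
    rw [re_ps] at this
    simpa using this
  · intro n s
    unfold hzTerm
    refine Finset.analyticAt_fun_prod _ fun i _ => ?_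
    exact analyticAt_rpowC_comp _ (analyticAt_coord i s).neg
  · intro n s _
    rw [norm_hzTerm hal]
    simp

/-! ### Reduction of the depth -/

/-- The exponents obtained by summing out `n_0` in the `k`-th term of the expansion: the exponent
of `n_1` becomes `s_0 + s_1 - 1 + k`, the others are unchanged. -/
noncomputable def merge {r : ℕ} (k : ℕ) (s : Fin (r + 2) → ℂ) : Fin (r + 1) → ℂ :=
  fun j => Fin.tail s j + if j = 0 then s 0 - 1 + k else 0

lemma merge_zero {r : ℕ} (k : ℕ) (s : Fin (r + 2) → ℂ) :
    merge k s 0 = s 1 + (s 0 - 1 + k) := by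
  simp [merge, Fin.tail]

lemma merge_succ {r : ℕ} (k : ℕ) (s : Fin (r + 2) → ℂ) (j : Fin r) :
    merge k s j.succ = s j.succ.succ := by
  simp [merge, Fin.tail]

lemma ps_merge {r : ℕ} (k : ℕ) (s : Fin (r + 2) → ℂ) (j : Fin (r + 1)) :
    ps (merge k s) j = ps s j.succ - 1 + k := by
  unfold merge
  rw [ps_add, ps_succ]
  have : ps (fun j : Fin (r + 1) => if j = 0 then s 0 - 1 + k else 0) j = s 0 - 1 + k := by
    rw [ps, Finset.sum_ite_eq']
    simp
  rw [this]; ring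

lemma analyticAt_merge {r : ℕ} (k : ℕ) (s : Fin (r + 2) → ℂ) : AnalyticAt ℂ (merge k) s := by
  refine AnalyticAt.pi (f := fun j s => merge k s j) fun j => ?_
  unfold merge
  have h1 := analyticAt_coord j.succ s
  have h2 := analyticAt_coord 0 s
  by_cases h : j = 0
  · simp only [h, if_true, Fin.tail]
    rw [h] at h1
    exact h1.add ((h2.sub analyticAt_const).add analyticAt_const)
  · simpa only [h, if_false, Fin.tail, add_zero] using h1

lemma Ur_mono {r : ℕ} {m m' : ℤ} (h : m ≤ m') : Ur r m ⊆ Ur r m' := by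
  intro s hs i
  have h1 := hs i
  have h2 : (m : ℝ) ≤ m' := by exact_mod_cast h
  linarith

lemma exists_mem_Ur {r : ℕ} (s : Fin r → ℂ) : ∃ N : ℕ, s ∈ Ur r N := by
  have h : ∀ i : Fin r, ∀ᶠ N : ℕ in Filter.atTop, ((i : ℕ) + 1 - (ps s i).re : ℝ) < N := fun i =>
    tendsto_natCast_atTop_atTop.eventually_gt_atTop _
  obtain ⟨N, hN⟩ := (Filter.eventually_all.2 h).exists
  refine ⟨N, mem_Ur.2 fun i => ?_⟩
  have := hN i
  push_cast
  linarith

lemma continuous_ps {r : ℕ} (i : Fin r) : Continuous fun s : Fin r → ℂ => ps s i := by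
  unfold ps; fun_prop

lemma analyticAt_ps {r : ℕ} (i : Fin r) (p : Fin r → ℂ) :
    AnalyticAt ℂ (fun s : Fin r → ℂ => ps s i) p := by
  unfold ps
  exact Finset.analyticAt_fun_sum _ fun j _ => analyticAt_coord j p

lemma isOpen_Ur (r : ℕ) (m : ℤ) : IsOpen (Ur r m) := by
  have : Ur r m = ⋂ i : Fin r, {s | ((i : ℕ) + 1 - m : ℝ) < (ps s i).re} := by
    ext s; simp [mem_Ur]
  rw [this]
  exact isOpen_iInter_of_finite fun i =>
    isOpen_lt continuous_const (Complex.continuous_re.comp (continuous_ps i))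

lemma merge_mem_Ur {r : ℕ} {k : ℕ} {s : Fin (r + 2) → ℂ} (hs : s ∈ Ur (r + 2) k) :
    merge k s ∈ Ur (r + 1) 0 := by
  refine mem_Ur.2 fun j => ?_
  have := mem_Ur.1 hs j.succ
  rw [ps_merge]
  simp only [Fin.val_succ] at this
  push_cast at this ⊢
  simp only [Complex.add_re, Complex.sub_re, Complex.one_re, Complex.natCast_re]
  linarith

/-- The product `∏_{i ≥ 1} (n_i + α_i) ^ (-s_i)` over all indices but the first. -/
noncomputable def tailTerm {r : ℕ} (al : Fin (r + 1) → ℝ) (s : Fin (r + 1) → ℂ)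
    (n : Fin (r + 1) → ℕ) : ℂ :=
  ∏ i : Fin r, rpowC ((n i.succ : ℝ) + al i.succ) (-(s i.succ))

lemma analyticAt_tailTerm {r : ℕ} (al : Fin (r + 1) → ℝ) (n : Fin (r + 1) → ℕ)
    (s : Fin (r + 1) → ℂ) : AnalyticAt ℂ (fun s => tailTerm al s n) s := by
  unfold tailTerm
  refine Finset.analyticAt_fun_prod _ fun i _ => ?_
  exact analyticAt_rpowC_comp _ (analyticAt_coord _ s).neg

lemma dtuple_two_le {r : ℕ} (n : DTuple (r + 2)) : (2 : ℝ) ≤ n.1 0 := by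
  have h1 : n.1 1 < n.1 0 := n.2.1 (by simp)
  have h2 := n.2.2 1
  exact_mod_cast (by omega : 2 ≤ n.1 0)

/-- A series `∑ g(s_0, n_0 + α_1) ∏_{i ≥ 1} (n_i + α_i) ^ (-s_i)` with
`g(z, X) = O(X ^ (-z - N))` converges to an analytic function on `Ur (r + 2) N`. -/
lemma analyticAt_tsum_tailTerm {r : ℕ} {al : Fin (r + 2) → ℝ}
    (hal : ∀ i, al i ∈ Set.Ico (0 : ℝ) 1) (N : ℕ) {g : ℂ → ℝ → ℂ}
    (hg : ∀ X z, AnalyticAt ℂ (fun z => g z X) z)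
    (hgb : ∀ M : ℝ, ∃ C, 0 ≤ C ∧ ∀ z, ‖z‖ ≤ M → ∀ X : ℝ, 2 ≤ X → ‖g z X‖ ≤ C * X ^ (-(z.re + N)))
    {s : Fin (r + 2) → ℂ} (hs : s ∈ Ur (r + 2) N) :
    AnalyticAt ℂ (fun s => ∑' n : DTuple (r + 2), g (s 0) (n.1 0 + al 1) * tailTerm al s n.1) s ∧
      Summable fun n : DTuple (r + 2) => g (s 0) (n.1 0 + al 1) * tailTerm al s n.1 := by
  obtain ⟨C, hC0, hC⟩ := hgb (‖s 0‖ + 1)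
  refine analyticAt_tsum_dtuple
    (g := fun n s => g (s 0) (n.1 0 + al 1) * tailTerm al s n.1)
    (be := fun i => if i = 0 then al 1 else al i) ?_ (fun i => if i = 0 then (N : ℝ) else 0)
    (C := C) ?_ ?_ ?_
  · intro i
    split_ifs <;> exact hal _
  · intro i
    have h1 := mem_Ur.1 hs i
    have h2 : ps (fun j : Fin (r + 2) => if j = 0 then (N : ℝ) else 0) i = N := by
      rw [ps, Finset.sum_ite_eq']; simp
    rw [ps_add, h2, ← re_ps]
    push_cast at h1
    linarith
  · intro n s
    have h1 := AnalyticAt.comp (g := fun z => g z (n.1 0 + al 1))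
      (f := fun s : Fin (r + 2) → ℂ => s 0) (hg (n.1 0 + al 1) (s 0)) (analyticAt_coord 0 s)
    exact h1.mul (analyticAt_tailTerm al n.1 s)
  · intro n t ht
    rw [norm_mul, tailTerm, norm_prod, Fin.prod_univ_succ (n := r + 1) (M := ℝ)]
    have h1 : ‖t 0‖ ≤ ‖s 0‖ + 1 := by
      have h2 := norm_le_pi_norm (t - s) 0
      rw [Metric.mem_ball, dist_eq_norm] at ht
      have h3 : ‖t 0‖ ≤ ‖s 0‖ + ‖(t - s) 0‖ := by
        simpa using norm_add_le (s 0) ((t - s) 0)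
      linarith
    have h2 := hC _ h1 (n.1 0 + al 1) (by linarith [dtuple_two_le n, (hal 1).1])
    rw [← mul_assoc]
    rw [if_pos rfl, if_pos rfl]
    refine mul_le_mul h2 (le_of_eq ?_) (by positivity) ?_
    · refine Finset.prod_congr rfl fun i _ => ?_
      rw [if_neg (Fin.succ_ne_zero i), if_neg (Fin.succ_ne_zero i), add_zero, norm_rpowC
        (by linarith [dtuple_one_le n i.succ, (hal i.succ).1]), Complex.neg_re]
    · exact mul_nonneg hC0 (Real.rpow_nonneg (by linarith [dtuple_two_le n, (hal 1).1]) _)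

/-- The remainder of the `N`-term expansion of `(s_0 - 1)` times the multiple Hurwitz series in
series of lower depth. -/
noncomputable def emRem {r : ℕ} (al : Fin (r + 2) → ℝ) (N : ℕ) (s : Fin (r + 2) → ℂ) : ℂ :=
  ∑' n : DTuple (r + 2), emErr (al 1 - al 0) N (s 0 - 1) (n.1 0 + al 1) * tailTerm al s n.1

lemma abs_sub_le_one {r : ℕ} {al : Fin (r + 2) → ℝ} (hal : ∀ i, al i ∈ Set.Ico (0 : ℝ) 1) :
    |al 1 - al 0| < 1 := by
  have h0 := hal 0
  have h1 := hal 1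
  exact abs_lt.2 ⟨by linarith [h0.2, h1.1], by linarith [h0.1, h1.2]⟩

lemma analyticAt_poch (k : ℕ) (z : ℂ) : AnalyticAt ℂ (fun w => poch w k) z := by
  unfold poch
  exact Finset.analyticAt_fun_prod _ fun j _ => by fun_prop

lemma analyticAt_emErr (b : ℝ) (N : ℕ) (X : ℝ) (z : ℂ) :
    AnalyticAt ℂ (fun w => emErr b N w X) z := by
  unfold emErr
  refine AnalyticAt.sub (Finset.analyticAt_fun_sum _ fun k _ => ?_) ?_
  · have h1 := analyticAt_poch k z
    have h2 := analyticAt_rpowC_comp (f := fun w : ℂ => -(w + k)) (p := z) (X - 1) (by fun_prop)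
    have h3 := analyticAt_rpowC_comp (f := fun w : ℂ => -(w + k)) (p := z) X (by fun_prop)
    exact (analyticAt_const.mul h1).mul (h2.sub h3)
  · have h2 := analyticAt_rpowC_comp (f := fun w : ℂ => -(w + 1)) (p := z) (X - b) (by fun_prop)
    exact analyticAt_id.mul h2

lemma emRem_analyticAt {r : ℕ} {al : Fin (r + 2) → ℝ}
    (hal : ∀ i, al i ∈ Set.Ico (0 : ℝ) 1) (N : ℕ) {s : Fin (r + 2) → ℂ} (hs : s ∈ Ur (r + 2) N) :
    AnalyticAt ℂ (emRem al N) s ∧ Summable fun n : DTuple (r + 2) =>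
      emErr (al 1 - al 0) N (s 0 - 1) (n.1 0 + al 1) * tailTerm al s n.1 := by
  refine analyticAt_tsum_tailTerm (g := fun z X => emErr (al 1 - al 0) N (z - 1) X) hal N
    (fun X z => ?_) (fun M => ?_) hs
  · exact (analyticAt_emErr _ N X (z - 1)).comp (f := fun z : ℂ => z - 1) (by fun_prop)
  · obtain ⟨C, hC0, hC⟩ := norm_emErr_le (al 1 - al 0) (abs_sub_le_one hal).le N (M + 1)
    refine ⟨C, hC0, fun z hz X hX => ?_⟩
    have h1 := hC (z - 1) ((norm_sub_le _ _).trans (by simpa using hz)) X hX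
    convert h1 using 4
    simp; ring

/-- Splitting off the first entry of a decreasing tuple. -/
def dtupleEquiv (r : ℕ) : DTuple (r + 1) × ℕ ≃ DTuple (r + 2) where
  toFun x := ⟨Fin.cons (x.1.1 0 + 1 + x.2) x.1.1, by
    refine ⟨Fin.strictAnti_iff_succ_lt.2 fun i => ?_, fun i => ?_⟩
    · refine Fin.cases ?_ (fun j => ?_) i
      · simp only [Fin.castSucc_zero, Fin.cons_zero, Fin.cons_succ]; omega
      · rw [← Fin.succ_castSucc, Fin.cons_succ, Fin.cons_succ]
        exact x.1.2.1 (by simp [Fin.lt_def])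
    · refine Fin.cases ?_ (fun j => ?_) i
      · simp only [Fin.cons_zero]; omega
      · simpa using x.1.2.2 j⟩
  invFun n := (⟨Fin.tail n.1, fun i j h => n.2.1 (by simpa using h), fun i => n.2.2 _⟩,
    n.1 0 - n.1 1 - 1)
  left_inv x := by
    refine Prod.ext (Subtype.ext ?_) ?_
    · simp
    · change x.1.1 0 + 1 + x.2 - x.1.1 0 - 1 = x.2
      omega
  right_inv n := by
    refine Subtype.ext ?_
    have h1 : n.1 1 < n.1 0 := n.2.1 (by simp)
    refine funext fun i => ?_
    refine Fin.cases ?_ (fun j => ?_) i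
    · change n.1 1 + 1 + (n.1 0 - n.1 1 - 1) = n.1 0
      omega
    · simp [Fin.tail]

lemma norm_rpowC_sub_le (k : ℕ) (M : ℝ) : ∃ C, 0 ≤ C ∧ ∀ z : ℂ, ‖z‖ ≤ M → ∀ X : ℝ, 2 ≤ X →
    ‖rpowC (X - 1) (-(z - 1 + k)) - rpowC X (-(z - 1 + k))‖ ≤ C * X ^ (-(z.re + k)) := by
  obtain ⟨C, hC0, hC⟩ := norm_rpowC_one_sub_sub_le 1 (M + 1 + k)
  refine ⟨C, hC0, fun z hz X hX => ?_⟩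
  have hX0 : (0 : ℝ) < X := by linarith
  have hy2 : X⁻¹ ≤ 1 / 2 := by
    rw [one_div]; exact inv_anti₀ (by norm_num) hX
  have hy0 : 0 < X⁻¹ := inv_pos.2 hX0
  have h1 := hC (z - 1 + k) (by
    refine (norm_add_le _ _).trans ?_
    rw [Complex.norm_natCast]
    have : ‖z - 1‖ ≤ M + 1 := (norm_sub_le _ _).trans (by simpa using hz)
    linarith) X⁻¹ (by rwa [abs_of_pos hy0])
  rw [Finset.sum_range_one, poch_zero, abs_of_pos hy0] at h1
  simp only [Nat.factorial_zero, Nat.cast_one, div_one, pow_zero, mul_one, pow_one] at h1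
  have e1 : X - 1 = X * (1 - X⁻¹) := by rw [mul_sub, mul_inv_cancel₀ hX0.ne']; ring
  have e2 : rpowC (X - 1) (-(z - 1 + k)) - rpowC X (-(z - 1 + k)) =
      rpowC X (-(z - 1 + k)) * (rpowC (1 - X⁻¹) (-(z - 1 + k)) - 1) := by
    rw [e1, rpowC_mul hX0 (by linarith)]; ring
  rw [e2, norm_mul, norm_rpowC hX0]
  calc X ^ (-(z - 1 + k)).re * _ ≤ X ^ (-(z - 1 + k)).re * (C * X⁻¹) := by
        gcongr
    _ = C * X ^ (-(z.re + k)) := by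
        rw [show -(z.re + k) = (-(z - 1 + (k : ℂ))).re - 1 by simp; ring, Real.rpow_sub_one hX0.ne']
        ring

lemma tendsto_rpowC_atTop {z : ℂ} (hz : 0 < z.re) (a : ℝ) :
    Filter.Tendsto (fun n : ℕ => rpowC (a + n) (-z)) Filter.atTop (nhds 0) := by
  rw [tendsto_zero_iff_norm_tendsto_zero]
  have h0 : Filter.Tendsto (fun n : ℕ => a + (n : ℝ)) Filter.atTop Filter.atTop :=
    Filter.tendsto_atTop_add_const_left _ _ tendsto_natCast_atTop_atTop
  have h1 := (tendsto_rpow_neg_atTop hz).comp h0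
  refine h1.congr' ?_
  filter_upwards [h0.eventually_gt_atTop 0] with n hn
  rw [norm_rpowC hn, Complex.neg_re]; rfl

lemma tsum_telescope_nat {z : ℂ} (hz : 0 < z.re) (a : ℝ)
    (hs : Summable fun j : ℕ => rpowC (a + j) (-z) - rpowC (a + (j + 1 : ℕ)) (-z)) :
    ∑' j : ℕ, (rpowC (a + j) (-z) - rpowC (a + (j + 1 : ℕ)) (-z)) = rpowC a (-z) := by
  have h1 := hs.hasSum.tendsto_sum_nat
  have h2 : Filter.Tendsto (fun n : ℕ => ∑ j ∈ Finset.range n,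
      (rpowC (a + j) (-z) - rpowC (a + (j + 1 : ℕ)) (-z))) Filter.atTop (nhds (rpowC a (-z))) := by
    have : ∀ n : ℕ, ∑ j ∈ Finset.range n,
      (rpowC (a + j) (-z) - rpowC (a + (j + 1 : ℕ)) (-z)) = rpowC a (-z) - rpowC (a + n) (-z) := by
      intro n
      rw [Finset.sum_range_sub' (fun j : ℕ => rpowC (a + j) (-z))]
      simp
    simp only [this]
    simpa using (tendsto_rpowC_atTop hz a).const_sub (rpowC a (-z))
  exact tendsto_nhds_unique h1 h2

/-- Summing a difference `(n_0 + α_1 - 1) ^ (-z) - (n_0 + α_1) ^ (-z)` over all `n_0 > n_1`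
telescopes to `(n_1 + α_1) ^ (-z)`, which is absorbed into the factor of index `1`. -/
lemma tsum_telescope {r : ℕ} {al : Fin (r + 2) → ℝ}
    (hal : ∀ i, al i ∈ Set.Ico (0 : ℝ) 1) (k : ℕ) {s : Fin (r + 2) → ℂ} (hs : s ∈ Ur (r + 2) k) :
    ∑' n : DTuple (r + 2), (rpowC (n.1 0 + al 1 - 1) (-(s 0 - 1 + k)) -
      rpowC (n.1 0 + al 1) (-(s 0 - 1 + k))) * tailTerm al s n.1
    = multipleHurwitz (Fin.tail al) (merge k s) := by
  have hsum := (analyticAt_tsum_tailTerm (g := fun z X => rpowC (X - 1) (-(z - 1 + k)) -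
    rpowC X (-(z - 1 + k))) hal k (fun X z => by
      have h2 := analyticAt_rpowC_comp (f := fun w : ℂ => -(w - 1 + k)) (p := z) (X - 1)
        (by fun_prop)
      have h3 := analyticAt_rpowC_comp (f := fun w : ℂ => -(w - 1 + k)) (p := z) X (by fun_prop)
      exact h2.sub h3) (norm_rpowC_sub_le k) hs).2
  rw [← (dtupleEquiv r).tsum_eq]
  rw [← (dtupleEquiv r).summable_iff] at hsum
  refine (Summable.tsum_prod hsum).trans ?_
  rw [multipleHurwitz]
  refine tsum_congr fun n => ?_
  have hs0 := mem_Ur.1 hs 0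
  rw [ps_zero] at hs0
  have hz : 0 < (s 0 - 1 + k).re := by
    simp only [Complex.add_re, Complex.sub_re, Complex.one_re, Complex.natCast_re]
    push_cast at hs0
    simp at hs0
    linarith
  have hT : ∀ j, tailTerm al s ((dtupleEquiv r (n, j)).1) =
      ∏ i : Fin (r + 1), rpowC ((n.1 i : ℝ) + al i.succ) (-(s i.succ)) := by
    intro j
    rfl
  have hd : ∀ j : ℕ, rpowC (((dtupleEquiv r (n, j)).1 0 : ℕ) + al 1 - 1) (-(s 0 - 1 + k)) -
      rpowC (((dtupleEquiv r (n, j)).1 0 : ℕ) + al 1) (-(s 0 - 1 + k)) =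
      rpowC ((n.1 0 + al 1 : ℝ) + j) (-(s 0 - 1 + k)) -
        rpowC ((n.1 0 + al 1 : ℝ) + (j + 1 : ℕ)) (-(s 0 - 1 + k)) := by
    intro j
    have : (((dtupleEquiv r (n, j)).1 0 : ℕ) : ℝ) = n.1 0 + 1 + j := by
      change ((n.1 0 + 1 + j : ℕ) : ℝ) = _
      push_cast; rfl
    rw [this]
    congr 2
    · ring
    · push_cast; ring
  have hj := hsum.prod_factor n
  simp only [Function.comp_apply, hT, hd] at hj ⊢
  rw [tsum_mul_right]
  have hne : ∏ i : Fin (r + 1), rpowC ((n.1 i : ℝ) + al i.succ) (-(s i.succ)) ≠ 0 :=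
    Finset.prod_ne_zero_iff.2 fun i _ => rpowC_ne_zero _ _
  rw [summable_mul_right_iff hne] at hj
  rw [tsum_telescope_nat hz _ hj, hzTerm, Fin.prod_univ_succ, Fin.prod_univ_succ, ← mul_assoc,
    merge_zero]
  refine congrArg₂ _ ?_ (Finset.prod_congr rfl fun i _ => by rw [merge_succ]; rfl)
  refine (rpowC_add (n.1 0 + al 1) (-(s 0 - 1 + k)) (-(s 1))).symm.trans ?_
  change rpowC _ _ = rpowC (n.1 0 + al 1) _
  congr 1
  ring

/-- One step of the continuation: the `N`-term expansion, divided by `s_0 - 1`. -/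
noncomputable def contPhi {r : ℕ} (al : Fin (r + 2) → ℝ) (F' : (Fin (r + 1) → ℂ) → ℂ) (N : ℕ)
    (s : Fin (r + 2) → ℂ) : ℂ :=
  (s 0 - 1)⁻¹ * (∑ k ∈ Finset.range N,
    bc (al 1 - al 0) k * poch (s 0 - 1) k * F' (merge k s) - emRem al N s)

lemma contPhi_zero {r : ℕ} {al : Fin (r + 2) → ℝ} (F' : (Fin (r + 1) → ℂ) → ℂ)
    {s : Fin (r + 2) → ℂ} (hs : s ∈ Ur (r + 2) 0) :
    contPhi al F' 0 s = multipleHurwitz al s := by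
  have hs0 := mem_Ur.1 hs 0
  rw [ps_zero] at hs0
  have hw : s 0 - 1 ≠ 0 := by
    intro h
    rw [sub_eq_zero.1 h] at hs0
    simp at hs0
  rw [contPhi, emRem, multipleHurwitz, Finset.range_zero, Finset.sum_empty, zero_sub,
    inv_mul_eq_iff_eq_mul₀ hw, ← tsum_neg, ← tsum_mul_left]
  refine tsum_congr fun n => ?_
  rw [emErr, Finset.range_zero, Finset.sum_empty, zero_sub, hzTerm, Fin.prod_univ_succ, tailTerm]
  rw [show (n.1 0 : ℝ) + al 1 - (al 1 - al 0) = n.1 0 + al 0 by ring,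
    show s 0 - 1 + 1 = s 0 by ring]
  ring

lemma contPhi_succ {r : ℕ} {al : Fin (r + 2) → ℝ} (hal : ∀ i, al i ∈ Set.Ico (0 : ℝ) 1)
    {F' : (Fin (r + 1) → ℂ) → ℂ}
    (hF : ∀ s ∈ Ur (r + 1) 0, F' s = multipleHurwitz (Fin.tail al) s) (N : ℕ)
    {s : Fin (r + 2) → ℂ} (hs : s ∈ Ur (r + 2) N) :
    contPhi al F' (N + 1) s = contPhi al F' N s := by
  have h1 := (emRem_analyticAt hal N hs).2
  have h2 := (emRem_analyticAt hal (N + 1) (Ur_mono (by simp) hs)).2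
  have h3 : emRem al (N + 1) s - emRem al N s =
      bc (al 1 - al 0) N * poch (s 0 - 1) N * F' (merge N s) := by
    rw [hF _ (merge_mem_Ur hs), ← tsum_telescope hal N hs, emRem, emRem, ← h2.tsum_sub h1,
      ← tsum_mul_left]
    refine tsum_congr fun n => ?_
    rw [emErr, emErr, Finset.sum_range_succ]
    ring
  rw [contPhi, contPhi, Finset.sum_range_succ, ← h3]
  ring

lemma contPhi_eq {r : ℕ} {al : Fin (r + 2) → ℝ} (hal : ∀ i, al i ∈ Set.Ico (0 : ℝ) 1)
    {F' : (Fin (r + 1) → ℂ) → ℂ}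
    (hF : ∀ s ∈ Ur (r + 1) 0, F' s = multipleHurwitz (Fin.tail al) s) {N N' : ℕ} (h : N ≤ N')
    {s : Fin (r + 2) → ℂ} (hs : s ∈ Ur (r + 2) N) :
    contPhi al F' N' s = contPhi al F' N s := by
  induction N', h using Nat.le_induction with
  | base => rfl
  | succ m hm ih =>
    rw [contPhi_succ hal hF m (Ur_mono (by exact_mod_cast hm) hs), ih]

/-- The continuation in depth `r + 2` built from a continuation `F'` in depth `r + 1`: at each point
the expansion is cut at some `N` for which the remainder converges there. By `contF_eq` the value
does not depend on this `N`. -/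
noncomputable def contF {r : ℕ} (al : Fin (r + 2) → ℝ) (F' : (Fin (r + 1) → ℂ) → ℂ)
    (s : Fin (r + 2) → ℂ) : ℂ :=
  contPhi al F' (exists_mem_Ur s).choose s

lemma contF_eq {r : ℕ} {al : Fin (r + 2) → ℝ} (hal : ∀ i, al i ∈ Set.Ico (0 : ℝ) 1)
    {F' : (Fin (r + 1) → ℂ) → ℂ}
    (hF : ∀ s ∈ Ur (r + 1) 0, F' s = multipleHurwitz (Fin.tail al) s) {N : ℕ}
    {s : Fin (r + 2) → ℂ} (hs : s ∈ Ur (r + 2) N) : contF al F' s = contPhi al F' N s := by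
  have h := (exists_mem_Ur s).choose_spec
  rw [contF, ← contPhi_eq hal hF (le_max_left _ N) h, contPhi_eq hal hF (le_max_right _ N) hs]

/-! ### The continuation and its possible poles -/

/-- The linear form `s_0 + ⋯ + s_i - (i + 1) + k` cutting out the hyperplane `q = (i, k)`. -/
noncomputable def ell {r : ℕ} (q : Fin r × ℕ) (s : Fin r → ℂ) : ℂ :=
  ps s q.1 - ((q.1 : ℕ) + 1 : ℂ) + (q.2 : ℂ)

lemma ell_merge {r : ℕ} (j : Fin (r + 1)) (m k : ℕ) (s : Fin (r + 2) → ℂ) :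
    ell (j, m) (merge k s) = ell (j.succ, m + k) s := by
  simp only [ell, ps_merge, Fin.val_succ]
  push_cast
  ring

lemma ell_zero {r : ℕ} (s : Fin (r + 1) → ℂ) : ell (0, 0) s = s 0 - 1 := by
  simp [ell, ps_zero]

lemma analyticAt_ell {r : ℕ} (q : Fin r × ℕ) (p : Fin r → ℂ) : AnalyticAt ℂ (ell q) p :=
  ((analyticAt_ps q.1 p).sub analyticAt_const).add analyticAt_const

lemma ell_inj {r : ℕ} {i : Fin r} {k k' : ℕ} {p : Fin r → ℂ} (h : ell (i, k) p = 0)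
    (h' : ell (i, k') p = 0) : k = k' := by
  have : (k : ℂ) = k' := by
    simp only [ell] at h h'
    linear_combination h - h'
  exact_mod_cast this

lemma mem_Hplane {r : ℕ} {i : Fin r} {k : ℕ} {p : Fin r → ℂ} :
    p ∈ Hplane r i k ↔ ell (i, k) p = 0 := by
  change ps p i = ((i : ℕ) + 1 : ℂ) - k ↔ ps p i - ((i : ℕ) + 1 : ℂ) + (k : ℂ) = 0
  constructor <;> intro h <;> linear_combination h

/-- `F` times the linear forms in `T` is, near `p` and off their zeros, an analytic function. -/
def Pol {r : ℕ} (T : Finset (Fin r × ℕ)) (F : (Fin r → ℂ) → ℂ) (p : Fin r → ℂ) : Prop :=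
  ∃ G : (Fin r → ℂ) → ℂ, AnalyticAt ℂ G p ∧
    ∀ᶠ s in nhds p, (∀ q ∈ T, ell q s ≠ 0) → G s = (∏ q ∈ T, ell q s) * F s

lemma Pol.of_analytic {r : ℕ} {F : (Fin r → ℂ) → ℂ} {p : Fin r → ℂ} (h : AnalyticAt ℂ F p) :
    Pol ∅ F p := ⟨F, h, by simp⟩

lemma Pol.analyticAt {r : ℕ} {F : (Fin r → ℂ) → ℂ} {p : Fin r → ℂ} (h : Pol ∅ F p) :
    AnalyticAt ℂ F p := by
  obtain ⟨G, hG, h⟩ := h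
  refine hG.congr ?_
  filter_upwards [h] with s hs
  simpa using hs

lemma Pol.mono {r : ℕ} {T T' : Finset (Fin r × ℕ)} {F : (Fin r → ℂ) → ℂ} {p : Fin r → ℂ}
    (h : Pol T F p) (hT : T ⊆ T') : Pol T' F p := by
  obtain ⟨G, hG, h⟩ := h
  refine ⟨fun s => (∏ q ∈ T' \ T, ell q s) * G s,
    (Finset.analyticAt_fun_prod _ fun q _ => analyticAt_ell q p).mul hG, ?_⟩
  filter_upwards [h] with s hs hs'
  rw [hs fun q hq => hs' q (hT hq), ← mul_assoc, Finset.prod_sdiff hT]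

lemma Pol.congr {r : ℕ} {T : Finset (Fin r × ℕ)} {F F' : (Fin r → ℂ) → ℂ} {p : Fin r → ℂ}
    (h : Pol T F p) (hF : ∀ᶠ s in nhds p, F s = F' s) : Pol T F' p := by
  obtain ⟨G, hG, h⟩ := h
  refine ⟨G, hG, ?_⟩
  filter_upwards [h, hF] with s hs hF hT
  rw [hs hT, hF]

lemma Pol.mul_analytic {r : ℕ} {T : Finset (Fin r × ℕ)} {f F : (Fin r → ℂ) → ℂ} {p : Fin r → ℂ}
    (hf : AnalyticAt ℂ f p) (h : Pol T F p) : Pol T (fun s => f s * F s) p := by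
  obtain ⟨G, hG, h⟩ := h
  refine ⟨fun s => f s * G s, hf.mul hG, ?_⟩
  filter_upwards [h] with s hs hT
  rw [hs hT]; ring

lemma Pol.sub {r : ℕ} {T : Finset (Fin r × ℕ)} {F F' : (Fin r → ℂ) → ℂ} {p : Fin r → ℂ}
    (h : Pol T F p) (h' : Pol T F' p) : Pol T (fun s => F s - F' s) p := by
  obtain ⟨G, hG, h⟩ := h
  obtain ⟨G', hG', h'⟩ := h'
  refine ⟨fun s => G s - G' s, hG.sub hG', ?_⟩
  filter_upwards [h, h'] with s hs hs' hT
  rw [hs hT, hs' hT]; ring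

lemma Pol.sum {r : ℕ} {ι : Type*} (A : Finset ι) {T : Finset (Fin r × ℕ)}
    {F : ι → (Fin r → ℂ) → ℂ} {p : Fin r → ℂ} (h : ∀ k ∈ A, Pol T (F k) p) :
    Pol T (fun s => ∑ k ∈ A, F k s) p := by
  choose! G hG h using h
  refine ⟨fun s => ∑ k ∈ A, G k s, Finset.analyticAt_fun_sum _ hG, ?_⟩
  filter_upwards [(Filter.eventually_all_finset A).2 h] with s hs hT
  rw [Finset.mul_sum]
  exact Finset.sum_congr rfl fun k hk => hs k hk hT

/-- The effect of `merge k` on the indices of hyperplanes. -/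
def shiftEmb (r k : ℕ) : Fin (r + 1) × ℕ ↪ Fin (r + 2) × ℕ :=
  ⟨fun q => (q.1.succ, q.2 + k), fun q q' h => by
    have h1 := Fin.succ_injective _ (congrArg Prod.fst h)
    have h2 := congrArg Prod.snd h
    simp only at h2
    exact Prod.ext h1 (by omega)⟩

lemma Pol.comp_merge {r k : ℕ} {T : Finset (Fin (r + 1) × ℕ)} {F : (Fin (r + 1) → ℂ) → ℂ}
    {p : Fin (r + 2) → ℂ} (h : Pol T F (merge k p)) :
    Pol (T.map (shiftEmb r k)) (fun s => F (merge k s)) p := by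
  obtain ⟨G, hG, h⟩ := h
  refine ⟨fun s => G (merge k s), hG.comp (analyticAt_merge k p), ?_⟩
  filter_upwards [(analyticAt_merge k p).continuousAt.eventually h] with s hs hT
  have he : ∀ q, ell (shiftEmb r k q) s = ell q (merge k s) := fun q => (ell_merge q.1 q.2 k s).symm
  rw [Finset.prod_map]
  simp only [he]
  exact hs fun q hq => by
    rw [← he]; exact hT _ (Finset.mem_map_of_mem _ hq)

lemma Pol.inv_mul {r : ℕ} {T : Finset (Fin (r + 1) × ℕ)} {F : (Fin (r + 1) → ℂ) → ℂ}
    {p : Fin (r + 1) → ℂ} (hT : (0, 0) ∉ T) (h : Pol T F p) :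
    Pol (insert (0, 0) T) (fun s => (s 0 - 1)⁻¹ * F s) p := by
  obtain ⟨G, hG, h⟩ := h
  refine ⟨G, hG, ?_⟩
  filter_upwards [h] with s hs hT'
  have h0 := hT' (0, 0) (Finset.mem_insert_self _ _)
  rw [Finset.prod_insert hT, hs fun q hq => hT' q (Finset.mem_insert_of_mem hq)]
  rw [ell_zero] at h0 ⊢
  field_simp

/-- `T` is the set of members of the collection `P` passing through `p`. -/
def IsFull {r : ℕ} (P : Fin r → ℕ → Prop) (p : Fin r → ℂ) (T : Finset (Fin r × ℕ)) : Prop :=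
  ∀ q, q ∈ T ↔ P q.1 q.2 ∧ ell q p = 0

lemma exists_isFull {r : ℕ} (P : Fin r → ℕ → Prop) (p : Fin r → ℂ) : ∃ T, IsFull P p T := by
  have : {q : Fin r × ℕ | P q.1 q.2 ∧ ell q p = 0}.Finite := by
    refine Set.Finite.of_finite_image (f := Prod.fst) (Set.toFinite _) ?_
    rintro ⟨i, k⟩ ⟨_, h⟩ ⟨i', k'⟩ ⟨_, h'⟩ (rfl : i = i')
    rw [ell_inj h h']
  exact ⟨this.toFinset, fun q => by simp⟩

/-- A collection of hyperplanes that contains all polar ones, whatever the parameters are. -/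
def Pall (r : ℕ) (i : Fin r) (k : ℕ) : Prop := (i : ℕ) ≠ 0 ∨ k = 0

/-- The continuation in depth one: the Hurwitz zeta function without its term at `0`. -/
noncomputable def contBase (al : Fin 1 → ℝ) (s : Fin 1 → ℂ) : ℂ :=
  HurwitzZeta.hurwitzZeta (al 0 : ℝ) (s 0) - if al 0 = 0 then 0 else rpowC (al 0) (-(s 0))

/-- The meromorphic continuation of the multiple Hurwitz zeta function, by recursion on the
depth. -/
noncomputable def contZ : (r : ℕ) → (Fin (r + 1) → ℝ) → (Fin (r + 1) → ℂ) → ℂ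
  | 0, al => contBase al
  | r + 1, al => contF al (contZ r (Fin.tail al))

/-- Decreasing tuples of length one are positive integers. -/
def dtupleOneEquiv : ℕ ≃ DTuple 1 where
  toFun n := ⟨fun _ => n + 1, Subsingleton.strictAnti _, fun _ => n.succ_pos⟩
  invFun n := n.1 0 - 1
  left_inv n := by simp
  right_inv n := by
    refine Subtype.ext (funext fun i => ?_)
    have h := n.2.2 0
    rw [Subsingleton.elim i 0]
    change n.1 0 - 1 + 1 = n.1 0
    omega

lemma contBase_eq {al : Fin 1 → ℝ} (hal : ∀ i, al i ∈ Set.Ico (0 : ℝ) 1) {s : Fin 1 → ℂ}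
    (hs : s ∈ Ur 1 0) : contBase al s = multipleHurwitz al s := by
  have hs0 : 1 < (s 0).re := by
    have := mem_Ur.1 hs 0
    rw [ps_zero] at this
    simpa using this
  have h0 := hal 0
  have h1 := HurwitzZeta.hasSum_hurwitzZeta_of_one_lt_re (a := al 0) ⟨h0.1, h0.2.le⟩ hs0
  have h2 := (hasSum_nat_add_iff' 1).2 h1
  rw [multipleHurwitz, ← dtupleOneEquiv.tsum_eq]
  have h3 : ∀ n : ℕ, hzTerm al s ((dtupleOneEquiv n).1) =
      1 / (((n + 1 : ℕ) : ℂ) + (al 0 : ℝ)) ^ (s 0) := by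
    intro n
    rw [hzTerm, Fin.prod_univ_one]
    have hpos : (0 : ℝ) < ((n + 1 : ℕ) : ℝ) + al 0 := by
      push_cast
      linarith [h0.1, n.cast_nonneg (α := ℝ)]
    refine (rpowC_eq_cpow hpos _).trans ?_
    rw [Complex.cpow_neg, one_div]
    push_cast
    rfl
  rw [tsum_congr h3, h2.tsum_eq, contBase, Finset.sum_range_one]
  congr 1
  rw [Nat.cast_zero, zero_add]
  split_ifs with h
  · rw [h, Complex.ofReal_zero, Complex.zero_cpow, div_zero]
    intro h'
    rw [h'] at hs0
    simp at hs0; linarith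
  · rw [rpowC_eq_cpow (lt_of_le_of_ne h0.1 (Ne.symm h)), Complex.cpow_neg, one_div]

/-- The pole of the Hurwitz zeta function at `1` is simple with residue `1`. -/
lemma contBase_pole (al : Fin 1 → ℝ) : ∃ g : ℂ → ℂ, (∀ z, AnalyticAt ℂ g z) ∧ g 1 = 1 ∧
    ∀ s : Fin 1 → ℂ, s 0 ≠ 1 → (s 0 - 1) * contBase al s = g (s 0) := by
  set h : ℂ → ℂ := fun z => HurwitzZeta.hurwitzZeta (al 0 : ℝ) z - 1 / (z - 1) / Gammaℝ z with hh
  set t : ℂ → ℂ := fun z => if al 0 = 0 then 0 else rpowC (al 0) (-z) with ht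
  have h1 : Differentiable ℂ h := by
    intro z
    by_cases hz : z = 1
    · rw [hz]; exact HurwitzZeta.differentiableAt_hurwitzZeta_sub_one_div _
    · refine (HurwitzZeta.differentiableAt_hurwitzZeta _ hz).sub ?_
      have h2 : DifferentiableAt ℂ (fun z : ℂ => 1 / (z - 1)) z := by
        refine DifferentiableAt.div (by fun_prop) (by fun_prop) (sub_ne_zero.2 hz)
      have h3 : DifferentiableAt ℂ (fun z : ℂ => 1 / (z - 1) * (Gammaℝ z)⁻¹) z :=
        h2.mul (differentiable_Gammaℝ_inv z)
      refine h3.congr_of_eventuallyEq (Filter.Eventually.of_forall fun z => ?_)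
      exact div_eq_mul_inv _ _
  have h2 : Differentiable ℂ t := by
    intro z
    simp only [ht]
    by_cases h : al 0 = 0
    · simp [h]
    · simp only [h, if_false]
      exact (analyticAt_rpowC_comp _ (f := fun z : ℂ => -z) (by fun_prop)).differentiableAt
  refine ⟨fun z => (z - 1) * h z + (Gammaℝ z)⁻¹ - (z - 1) * t z, fun z => ?_, ?_, ?_⟩
  · have h3 : Differentiable ℂ fun z => (z - 1) * h z + (Gammaℝ z)⁻¹ - (z - 1) * t z :=
      ((Differentiable.mul (by fun_prop) h1).add differentiable_Gammaℝ_inv).sub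
        (Differentiable.mul (by fun_prop) h2)
    exact h3.analyticAt z
  · simp
  · intro s hs
    have hs' := sub_ne_zero.2 hs
    simp only [contBase, hh, ht]
    field_simp
    ring

lemma tail_mem {r : ℕ} {al : Fin (r + 1) → ℝ} (hal : ∀ i, al i ∈ Set.Ico (0 : ℝ) 1) :
    ∀ i, Fin.tail al i ∈ Set.Ico (0 : ℝ) 1 := fun i => hal i.succ

lemma contZ_eq : ∀ (r : ℕ) {al : Fin (r + 1) → ℝ} (_ : ∀ i, al i ∈ Set.Ico (0 : ℝ) 1)
    {s : Fin (r + 1) → ℂ}, s ∈ Ur (r + 1) 0 → contZ r al s = multipleHurwitz al s := by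
  intro r
  induction r with
  | zero => intro al hal s hs; exact contBase_eq hal hs
  | succ r ih =>
    intro al hal s hs
    rw [contZ, contF_eq hal (N := 0) (fun s hs => ih (tail_mem hal) hs) hs]
    exact contPhi_zero _ hs

lemma contZ_eventually {r : ℕ} {al : Fin (r + 2) → ℝ} (hal : ∀ i, al i ∈ Set.Ico (0 : ℝ) 1)
    {N : ℕ} {p : Fin (r + 2) → ℂ} (hp : p ∈ Ur (r + 2) N) :
    ∀ᶠ s in nhds p, contPhi al (contZ r (Fin.tail al)) N s = contZ (r + 1) al s := by
  filter_upwards [(isOpen_Ur _ _).mem_nhds hp] with s hs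
  rw [contZ, contF_eq hal (fun s hs => contZ_eq r (tail_mem hal) hs) hs]

/-- The polar hyperplanes in depth `r + 2`, in terms of those in depth `r + 1`: the pole of
`1 / (s_0 - 1)`, and the pullbacks under `merge k` for those `k` whose coefficient is nonzero. Only
the hyperplanes of index `1` are sensitive to the vanishing of coefficients, being the pullbacks of
the single hyperplane `(0, 0)` of index `0`. -/
lemma contZ_pol_step {r : ℕ} {al : Fin (r + 2) → ℝ} (hal : ∀ i, al i ∈ Set.Ico (0 : ℝ) 1)
    (ih : ∀ p T, IsFull (Pall (r + 1)) p T → Pol T (contZ r (Fin.tail al)) p)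
    {P : Fin (r + 2) → ℕ → Prop} (h0 : P 0 0) (h1 : ∀ k, bc (al 1 - al 0) k ≠ 0 → P 1 k)
    (h2 : ∀ i : Fin (r + 2), ∀ k, 2 ≤ (i : ℕ) → P i k) {p : Fin (r + 2) → ℂ}
    {T : Finset (Fin (r + 2) × ℕ)} (hT : IsFull P p T) : Pol T (contZ (r + 1) al) p := by
  obtain ⟨N, hN⟩ := exists_mem_Ur p
  refine Pol.congr ?_ (contZ_eventually hal hN)
  set T' := T.erase (0, 0) with hT'
  have hin : Pol T' (fun s => ∑ k ∈ Finset.range N, bc (al 1 - al 0) k * poch (s 0 - 1) k *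
      contZ r (Fin.tail al) (merge k s) - emRem al N s) p := by
    refine Pol.sub (Pol.sum _ fun k _ => ?_)
      ((Pol.of_analytic (emRem_analyticAt hal N hN).1).mono (Finset.empty_subset _))
    by_cases hb : bc (al 1 - al 0) k = 0
    · simp only [hb, zero_mul]
      exact (Pol.of_analytic analyticAt_const).mono (Finset.empty_subset _)
    obtain ⟨T₁, hT₁⟩ := exists_isFull (Pall (r + 1)) (merge k p)
    have hpo : AnalyticAt ℂ (fun s : Fin (r + 2) → ℂ => bc (al 1 - al 0) k * poch (s 0 - 1) k) p :=
      analyticAt_const.mul ((analyticAt_poch k (p 0 - 1)).comp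
        (f := fun s : Fin (r + 2) → ℂ => s 0 - 1) ((analyticAt_coord 0 p).sub analyticAt_const))
    refine Pol.mul_analytic hpo ((ih _ T₁ hT₁).comp_merge.mono ?_)
    intro q hq
    obtain ⟨⟨j, m⟩, hjm, rfl⟩ := Finset.mem_map.1 hq
    obtain ⟨hP, he⟩ := (hT₁ _).1 hjm
    rw [ell_merge] at he
    refine Finset.mem_erase.2 ⟨fun h => Fin.succ_ne_zero j (congrArg Prod.fst h),
      (hT _).2 ⟨?_, he⟩⟩
    change P j.succ (m + k)
    by_cases hj : j = 0
    · subst hj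
      have hm : m = 0 := by simpa [Pall] using hP
      subst hm
      simpa using h1 k hb
    · refine h2 _ _ ?_
      have : (j : ℕ) ≠ 0 := fun h => hj (Fin.ext h)
      simp only [Fin.val_succ]
      omega
  by_cases hp : p 0 = 1
  · have hmem : ((0 : Fin (r + 2)), 0) ∈ T := (hT _).2 ⟨h0, by rw [ell_zero, hp, sub_self]⟩
    rw [← Finset.insert_erase hmem]
    exact Pol.inv_mul (Finset.notMem_erase _ _) hin
  · refine Pol.mul_analytic (AnalyticAt.inv ((analyticAt_coord 0 p).sub analyticAt_const)
      (sub_ne_zero.2 hp)) (hin.mono (Finset.erase_subset _ _))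

lemma contZ_pol : ∀ (r : ℕ) {al : Fin (r + 1) → ℝ} (_ : ∀ i, al i ∈ Set.Ico (0 : ℝ) 1)
    (p : Fin (r + 1) → ℂ) (T : Finset (Fin (r + 1) × ℕ)), IsFull (Pall (r + 1)) p T →
    Pol T (contZ r al) p := by
  intro r
  induction r with
  | zero =>
    intro al hal p T hT
    obtain ⟨g, hg, -, h⟩ := contBase_pole al
    have hc : AnalyticAt ℂ (fun s : Fin 1 → ℂ => s 0) p := analyticAt_coord 0 p
    have hgp : AnalyticAt ℂ (fun s : Fin 1 → ℂ => g (s 0)) p :=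
      AnalyticAt.comp (g := g) (f := fun s : Fin 1 → ℂ => s 0) (hg (p 0)) hc
    by_cases hp : p 0 = 1
    · refine Pol.mono (T := {(0, 0)}) ⟨fun s => g (s 0), hgp, Filter.Eventually.of_forall ?_⟩ ?_
      · intro s hs
        have := hs (0, 0) (by simp)
        rw [ell_zero] at this
        rw [Finset.prod_singleton, ell_zero]
        exact (h s (sub_ne_zero.1 this)).symm
      · rw [Finset.singleton_subset_iff]
        exact (hT _).2 ⟨Or.inr rfl, by rw [ell_zero, hp, sub_self]⟩
    · refine (Pol.of_analytic ?_).mono (Finset.empty_subset _)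
      have h1 : AnalyticAt ℂ (fun s : Fin 1 → ℂ => (s 0 - 1)⁻¹ * g (s 0)) p :=
        (AnalyticAt.inv (hc.sub analyticAt_const) (sub_ne_zero.2 hp)).mul hgp
      refine h1.congr ?_
      filter_upwards [hc.continuousAt.eventually_ne hp] with s hs
      rw [← h s hs, inv_mul_cancel_left₀ (sub_ne_zero.2 hs)]
      rfl
  | succ r ih =>
    intro al hal p T hT
    exact contZ_pol_step hal (fun p T => ih (tail_mem hal) p T) (P := Pall (r + 2)) (Or.inr rfl)
      (fun k _ => Or.inl (by simp)) (fun i k hi => Or.inl (by omega)) hT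

/-! ### Residues at generic points -/

/-- Nonzero combinations of rising factorials do not vanish at all of `I, 2 I, 3 I, …`. -/
lemma exists_sum_poch_ne_zero {c : ℕ → ℂ} {k k' : ℕ} (hk : k' ≤ k) (hc : c k' ≠ 0) :
    ∃ n : ℕ, n ≠ 0 ∧ ∑ m ∈ Finset.range (k + 1), c m * poch ((n : ℂ) * I) m ≠ 0 := by
  by_contra! h
  set Q : Polynomial ℂ := ∑ m ∈ Finset.range (k + 1),
    Polynomial.C (c m) * ∏ j ∈ Finset.range m, (Polynomial.X + Polynomial.C (j : ℂ)) with hQ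
  have hev : ∀ z, Q.eval z = ∑ m ∈ Finset.range (k + 1), c m * poch z m := by
    intro z
    simp [hQ, Polynomial.eval_finsetSum, Polynomial.eval_prod, poch]
  have hQ0 : Q = 0 := by
    refine Polynomial.eq_zero_of_infinite_isRoot _ ?_
    refine Set.Infinite.mono (s := Set.range fun n : ℕ => ((n + 1 : ℕ) : ℂ) * I) ?_ ?_
    · rintro _ ⟨n, rfl⟩
      exact (hev _).trans (h (n + 1) (by simp))
    · refine Set.infinite_range_of_injective fun a b hab => ?_
      have := mul_right_cancel₀ I_ne_zero hab
      have : a + 1 = b + 1 := by exact_mod_cast this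
      omega
  -- Evaluation at `-m` makes the system triangular.
  have hall : ∀ m, m ≤ k → c m = 0 := by
    intro m
    induction m using Nat.strong_induction_on with
    | _ m ih =>
      intro hm
      have h1 := hev (-(m : ℂ))
      rw [hQ0, Polynomial.eval_zero, Finset.sum_eq_single m] at h1
      · refine (mul_eq_zero.1 h1.symm).resolve_right ?_
        refine Finset.prod_ne_zero_iff.2 fun j hj => ?_
        have hj := Finset.mem_range.1 hj
        intro h
        have : (j : ℂ) = m := by linear_combination h
        have : j = m := by exact_mod_cast this
        omega
      · intro b hb hbm
        rcases lt_or_gt_of_ne hbm with hlt | hgt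
        · rw [ih b hlt (by omega), zero_mul]
        · rw [poch, Finset.prod_eq_zero (Finset.mem_range.2 hgt) (by ring), mul_zero]
      · intro hm'
        exact absurd (Finset.mem_range.2 (by omega)) hm'
  exact hc (hall k' hk)

/-- The residue of `F` along the hyperplane `(i, k)` at `p` exists and equals `R`. -/
def HasRes {r : ℕ} (F : (Fin r → ℂ) → ℂ) (i : Fin r) (k : ℕ) (p : Fin r → ℂ) (R : ℂ) : Prop :=
  Filter.Tendsto (fun s => ell (i, k) s * F s) (nhdsWithin p {s | ell (i, k) s ≠ 0}) (nhds R)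

/-- A condition guaranteeing that `p` lies on no hyperplane `(j, m)` with `j ≠ i`, with some room
(measured by `M`) in the coordinates of index `> i`. -/
def GenPt {r : ℕ} (M : ℕ) (i : Fin r) (p : Fin r → ℂ) : Prop :=
  (∀ j < i, (ps p j).im ≠ 0) ∧ ∀ j > i, ((j : ℕ) + 1 + M : ℝ) < (ps p j).re

lemma GenPt.ell_ne_zero {r M : ℕ} {i : Fin r} {p : Fin r → ℂ} (h : GenPt M i p) {j : Fin r}
    (hj : j ≠ i) (m : ℕ) : ell (j, m) p ≠ 0 := by
  intro h0
  have h1 : ps p j = ((j : ℕ) + 1 : ℂ) - m := by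
    simp only [ell] at h0
    linear_combination h0
  rcases lt_or_gt_of_ne hj with hlt | hgt
  · refine h.1 j hlt ?_
    rw [h1]; simp
  · have h2 := h.2 j hgt
    rw [h1] at h2
    simp at h2
    have := m.cast_nonneg (α := ℝ)
    have := M.cast_nonneg (α := ℝ)
    linarith

lemma GenPt.mono {r M M' : ℕ} {i : Fin r} {p : Fin r → ℂ} (h : GenPt M i p) (hM : M' ≤ M) :
    GenPt M' i p := by
  refine ⟨h.1, fun j hj => ?_⟩
  have := h.2 j hj
  have : (M' : ℝ) ≤ M := by exact_mod_cast hM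
  linarith

lemma exists_hasRes (r : ℕ) {al : Fin (r + 1) → ℝ} (hal : ∀ i, al i ∈ Set.Ico (0 : ℝ) 1)
    {M : ℕ} {i : Fin (r + 1)} {k : ℕ} {p : Fin (r + 1) → ℂ} (hp : ell (i, k) p = 0)
    (hg : GenPt M i p) : ∃ R, HasRes (contZ r al) i k p R := by
  obtain ⟨T, hT⟩ := exists_isFull (Pall (r + 1)) p
  have hsub : T ⊆ {(i, k)} := by
    rintro ⟨j, m⟩ hjm
    obtain ⟨-, h0⟩ := (hT _).1 hjm
    have hj : j = i := by
      by_contra hj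
      exact hg.ell_ne_zero hj m h0
    subst hj
    rw [Finset.mem_singleton, ell_inj h0 hp]
  obtain ⟨G, hG, h⟩ := (contZ_pol r hal p T hT).mono hsub
  refine ⟨G p, (hG.continuousAt.tendsto.mono_left nhdsWithin_le_nhds).congr' ?_⟩
  filter_upwards [nhdsWithin_le_nhds h, self_mem_nhdsWithin] with s hs hs'
  rw [hs (by simpa using hs'), Finset.prod_singleton]

lemma analyticAt_contZ (r : ℕ) {al : Fin (r + 1) → ℝ} (hal : ∀ i, al i ∈ Set.Ico (0 : ℝ) 1)
    {M : ℕ} {i : Fin (r + 1)} {p : Fin (r + 1) → ℂ} (hp : ∀ k, ell (i, k) p ≠ 0)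
    (hg : GenPt M i p) : AnalyticAt ℂ (contZ r al) p := by
  refine (contZ_pol r hal p ∅ ?_).analyticAt
  rintro ⟨j, m⟩
  refine iff_of_false (Finset.notMem_empty _) fun h => ?_
  by_cases hj : j = i
  · subst hj; exact hp m h.2
  · exact hg.ell_ne_zero hj m h.2

lemma HasRes.comp_merge {r : ℕ} {F : (Fin (r + 1) → ℂ) → ℂ} {j : Fin (r + 1)} {m κ : ℕ}
    {p : Fin (r + 2) → ℂ} {R : ℂ} (h : HasRes F j m (merge κ p) R) :
    HasRes (fun s => F (merge κ s)) j.succ (m + κ) p R := by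
  have h1 : Filter.Tendsto (merge κ) (nhdsWithin p {s | ell (j.succ, m + κ) s ≠ 0})
      (nhdsWithin (merge κ p) {s | ell (j, m) s ≠ 0}) := by
    refine tendsto_nhdsWithin_iff.2 ⟨(analyticAt_merge κ p).continuousAt.tendsto.mono_left
      nhdsWithin_le_nhds, ?_⟩
    filter_upwards [self_mem_nhdsWithin] with s hs
    rw [ell_merge]; exact hs
  refine (Filter.Tendsto.comp h h1).congr fun s => ?_
  simp only [Function.comp_apply, ell_merge]

lemma HasRes.of_analytic {r : ℕ} {F : (Fin r → ℂ) → ℂ} {i : Fin r} {k : ℕ} {p : Fin r → ℂ}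
    (hF : AnalyticAt ℂ F p) (hp : ell (i, k) p = 0) : HasRes F i k p 0 := by
  have h := ((analyticAt_ell (i, k) p).mul hF).continuousAt.tendsto
  simp only [Pi.mul_apply, hp, zero_mul] at h
  exact h.mono_left nhdsWithin_le_nhds

/-- The residue of `contPhi` in terms of the residues in lower depth. -/
lemma hasRes_contZ {r : ℕ} {al : Fin (r + 2) → ℝ} (hal : ∀ i, al i ∈ Set.Ico (0 : ℝ) 1)
    {N : ℕ} {p : Fin (r + 2) → ℂ} (hp : p ∈ Ur (r + 2) N) (hp1 : p 0 ≠ 1) {i : Fin (r + 2)} {k : ℕ}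
    (hi : ell (i, k) p = 0) {R : ℕ → ℂ}
    (hR : ∀ κ < N, HasRes (fun s => contZ r (Fin.tail al) (merge κ s)) i k p (R κ)) :
    HasRes (contZ (r + 1) al) i k p ((p 0 - 1)⁻¹ *
      ∑ κ ∈ Finset.range N, bc (al 1 - al 0) κ * poch (p 0 - 1) κ * R κ) := by
  have he := HasRes.of_analytic (emRem_analyticAt hal N hp).1 hi
  have hs := tendsto_finsetSum (Finset.range N) fun κ hκ =>
    Filter.Tendsto.mul (f := fun s : Fin (r + 2) → ℂ => bc (al 1 - al 0) κ * poch (s 0 - 1) κ)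
      ((analyticAt_const.mul ((analyticAt_poch κ (p 0 - 1)).comp
        (f := fun s : Fin (r + 2) → ℂ => s 0 - 1)
          ((analyticAt_coord 0 p).sub analyticAt_const))).continuousAt.tendsto.mono_left
            nhdsWithin_le_nhds) (hR κ (Finset.mem_range.1 hκ))
  have hinv : Filter.Tendsto (fun s : Fin (r + 2) → ℂ => (s 0 - 1)⁻¹)
      (nhdsWithin p {s | ell (i, k) s ≠ 0}) (nhds (p 0 - 1)⁻¹) :=
    (AnalyticAt.inv ((analyticAt_coord 0 p).sub analyticAt_const)
      (sub_ne_zero.2 hp1)).continuousAt.tendsto.mono_left nhdsWithin_le_nhds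
  have h := hinv.mul (hs.sub he)
  rw [sub_zero] at h
  refine h.congr' ?_
  filter_upwards [nhdsWithin_le_nhds (contZ_eventually hal hp)] with s hs
  rw [← hs, contPhi]
  rw [Finset.sum_congr rfl fun κ _ => mul_left_comm _ (ell (i, k) s) _, ← Finset.mul_sum]
  ring

/-! ### Nonvanishing of residues -/

/-- The hyperplane `(i, k)` is genuinely polar for the continuation, as witnessed by generic points
with arbitrarily much room. -/
def Nv (r : ℕ) (al : Fin (r + 1) → ℝ) (i : Fin (r + 1)) (k : ℕ) : Prop :=
  ∀ M : ℕ, ∃ p, ell (i, k) p = 0 ∧ GenPt M i p ∧ ∃ R ≠ 0, HasRes (contZ r al) i k p R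

/-- The point with first coordinate `1 + w` whose image under `merge m` is `q`. -/
noncomputable def unmerge {r : ℕ} (w : ℂ) (m : ℕ) (q : Fin (r + 1) → ℂ) : Fin (r + 2) → ℂ :=
  Fin.cons (1 + w) (fun j => q j - if j = 0 then w + m else 0)

lemma merge_unmerge {r : ℕ} (w : ℂ) (m κ : ℕ) (q : Fin (r + 1) → ℂ) :
    merge κ (unmerge w m q) = fun j => q j + if j = 0 then (κ : ℂ) - m else 0 := by
  funext j
  by_cases h : j = 0
  · subst h; simp [merge, unmerge]; ring
  · simp [merge, unmerge, h]

lemma unmerge_zero {r : ℕ} (w : ℂ) (m : ℕ) (q : Fin (r + 1) → ℂ) : unmerge w m q 0 = 1 + w := rfl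

lemma ps_shift {r : ℕ} (q : Fin (r + 1) → ℂ) (c : ℂ) (j : Fin (r + 1)) :
    ps (fun j => q j + if j = 0 then c else 0) j = ps q j + c := by
  rw [ps_add]
  congr 1
  rw [ps, Finset.sum_ite_eq']
  simp

/-- If `(j, k - k')` is genuinely polar in lower depth and the `k'`-th coefficient of the expansion
does not vanish, then `(j + 1, k)` is genuinely polar: the residues contributed by the various
terms are the coefficients of linearly independent polynomials in `s_0`. -/
lemma Nv_step {r : ℕ} {al : Fin (r + 2) → ℝ} (hal : ∀ i, al i ∈ Set.Ico (0 : ℝ) 1)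
    (j : Fin (r + 1)) {k k' : ℕ} (hk : k' ≤ k) (hbc : bc (al 1 - al 0) k' ≠ 0)
    (h : Nv r (Fin.tail al) j (k - k')) : Nv (r + 1) al j.succ k := by
  intro M
  obtain ⟨q, hq, hg, R₀, hR₀, hres⟩ := h (M + k')
  -- `Q κ` is the image under `merge κ` of the point to be constructed.
  set Q : ℕ → Fin (r + 1) → ℂ := fun κ j => q j + if j = 0 then (κ : ℂ) - k' else 0 with hQ
  have hps : ∀ κ i, ps (Q κ) i = ps q i + ((κ : ℂ) - k') := fun κ i => ps_shift q _ i
  have hgQ : ∀ κ, GenPt 0 j (Q κ) := by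
    intro κ
    refine ⟨fun i hi => ?_, fun i hi => ?_⟩
    · rw [hps]
      have := hg.1 i hi
      simpa using this
    · rw [hps]
      have h1 := hg.2 i hi
      have := κ.cast_nonneg (α := ℝ)
      have := M.cast_nonneg (α := ℝ)
      simp only [Complex.add_re, Complex.sub_re, Complex.natCast_re]
      push_cast at h1 ⊢
      linarith
  have hqj : ps q j = ((j : ℕ) + 1 : ℂ) - k + k' := by
    simp only [ell, Nat.cast_sub hk] at hq
    linear_combination hq
  have hellQ : ∀ κ m, ell (j, m) (Q κ) = (m : ℂ) + κ - k := by
    intro κ m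
    simp only [ell, hps, hqj]
    ring
  -- For `κ > k` the point `Q κ` lies on no polar hyperplane and contributes residue zero.
  have hex : ∀ κ, ∃ R, (κ ≤ k → HasRes (contZ r (Fin.tail al)) j (k - κ) (Q κ) R) ∧
      (k < κ → R = 0) ∧ (κ = k' → R ≠ 0) := by
    intro κ
    rcases lt_or_ge k κ with hκ | hκ
    · exact ⟨0, fun h => absurd h (by omega), fun _ => rfl, fun h => absurd h (by omega)⟩
    by_cases hkk : κ = k'
    · subst hkk
      refine ⟨R₀, fun _ => ?_, fun h => absurd h (by omega), fun _ => hR₀⟩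
      have : Q κ = q := by
        funext i; simp [hQ]
      rwa [this]
    · obtain ⟨R, hR⟩ := exists_hasRes r (tail_mem hal) (p := Q κ) (k := k - κ) (i := j)
        (by rw [hellQ, Nat.cast_sub hκ]; ring) (hgQ κ)
      exact ⟨R, fun _ => hR, fun h => absurd h (by omega), fun h => absurd h hkk⟩
  choose R hR1 hR2 hR3 using hex
  -- The residues `R κ` do not depend on the first coordinate `1 + n I`, so `n` may be chosen last.
  obtain ⟨n, hn, hsum⟩ := exists_sum_poch_ne_zero (c := fun κ => bc (al 1 - al 0) κ * R κ) hk
    (mul_ne_zero hbc (hR3 k' rfl))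
  set w : ℂ := (n : ℂ) * I with hw
  have hw0 : w ≠ 0 := mul_ne_zero (by exact_mod_cast hn) I_ne_zero
  set p := unmerge w k' q with hp
  have hm : ∀ κ, merge κ p = Q κ := fun κ => merge_unmerge w k' κ q
  have hpsp : ∀ i : Fin (r + 1), ps p i.succ = ps q i + 1 - k' := by
    intro i
    have h1 := ps_merge 0 p i
    rw [hm, hps] at h1
    push_cast at h1
    linear_combination -h1
  have hp0 : p 0 - 1 = w := by rw [hp, unmerge_zero]; ring
  have hellp : ell (j.succ, k) p = 0 := by
    have h1 := ell_merge j k 0 p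
    rw [hm, hellQ] at h1
    rw [← add_zero k, ← h1]
    push_cast
    ring
  refine ⟨p, hellp, ⟨fun i hi => ?_, fun i hi => ?_⟩, ?_⟩
  · refine Fin.cases ?_ (fun i hi => ?_) i hi
    · intro _
      rw [ps_zero, hp, unmerge_zero, hw]
      simpa using hn
    · have := hg.1 i (Fin.succ_lt_succ_iff.1 hi)
      rw [hpsp]
      simpa using this
  · refine Fin.cases ?_ (fun i hi => ?_) i hi
    · intro h; exact absurd h (by simp)
    · have := hg.2 i (Fin.succ_lt_succ_iff.1 hi)
      rw [hpsp]
      push_cast at this ⊢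
      simp only [Complex.add_re, Complex.sub_re, Complex.natCast_re, Complex.one_re, Fin.val_succ]
      push_cast
      linarith
  obtain ⟨N₀, hN₀⟩ := exists_mem_Ur p
  set N := max N₀ (k + 1) with hN
  have hpN : p ∈ Ur (r + 2) N := Ur_mono (by exact_mod_cast le_max_left _ _) hN₀
  refine ⟨_, ?_, hasRes_contZ hal hpN (fun h => hw0 (by rw [← hp0, h, sub_self])) hellp (R := R)
    fun κ _ => ?_⟩
  · rw [hp0]
    refine mul_ne_zero (inv_ne_zero hw0) ?_
    rw [← Finset.sum_subset (Finset.range_mono (le_max_right N₀ (k + 1)))]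
    · refine (Finset.sum_congr rfl fun κ _ => ?_).trans_ne hsum
      ring
    · intro κ _ hκ
      rw [hR2 κ (by simpa using hκ), mul_zero]
  · rcases lt_or_ge k κ with hκ | hκ
    · rw [hR2 κ hκ]
      refine HasRes.of_analytic ?_ hellp
      refine AnalyticAt.comp (g := contZ r (Fin.tail al)) ?_ (analyticAt_merge κ p)
      rw [hm]
      refine analyticAt_contZ r (tail_mem hal) (i := j) (M := 0) (fun m hm => ?_) (hgQ κ)
      rw [hellQ] at hm
      have h1 : ((m + κ : ℕ) : ℂ) = k := by push_cast; linear_combination hm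
      have h2 : m + κ = k := by exact_mod_cast h1
      omega
    · have h1 := hR1 κ hκ
      rw [← hm] at h1
      have h2 := h1.comp_merge
      rwa [Nat.sub_add_cancel hκ] at h2

lemma multipleHurwitz_ne_zero {r : ℕ} {al : Fin r → ℝ} (hal : ∀ i, al i ∈ Set.Ico (0 : ℝ) 1)
    {s : Fin r → ℂ} (hs : s ∈ Ur r 0) (hre : ∀ i, (s i).im = 0) : multipleHurwitz al s ≠ 0 := by
  have hsum := (multipleHurwitz_analyticAt hal hs).2
  have hpos : ∀ n : DTuple r, ∀ i, (0 : ℝ) < n.1 i + al i := fun n i => by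
    linarith [dtuple_one_le n i, (hal i).1]
  have hterm : ∀ n : DTuple r, hzTerm al s n.1 =
      ((∏ i, ((n.1 i : ℝ) + al i) ^ (-(s i).re) : ℝ) : ℂ) := by
    intro n
    rw [hzTerm, Complex.ofReal_prod]
    refine Finset.prod_congr rfl fun i _ => ?_
    refine (rpowC_eq_cpow (hpos n i) _).trans ?_
    rw [Complex.ofReal_cpow (hpos n i).le]
    congr 1
    exact Complex.ext (by simp) (by simp [hre])
  rw [multipleHurwitz, tsum_congr hterm, ← Complex.ofReal_tsum]
  rw [summable_congr hterm, Complex.summable_ofReal] at hsum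
  have hp : ∀ n : DTuple r, 0 < ∏ i, ((n.1 i : ℝ) + al i) ^ (-(s i).re) := fun n =>
    Finset.prod_pos fun i _ => Real.rpow_pos_of_pos (hpos n i) _
  let n₀ : DTuple r := ⟨fun i => r - i, fun i j hij => by
    have := j.isLt
    have : (i : ℕ) < j := hij
    change r - (j : ℕ) < r - (i : ℕ)
    omega, fun i => by
    have := i.isLt
    change 0 < r - (i : ℕ)
    omega⟩
  exact_mod_cast (hsum.tsum_pos (fun n => (hp n).le) n₀ (hp n₀)).ne'

/-- The pole along `s_0 = 1`, with residue a convergent series of positive terms. -/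
lemma Nv_zero (r : ℕ) {al : Fin (r + 1) → ℝ} (hal : ∀ i, al i ∈ Set.Ico (0 : ℝ) 1) :
    Nv r al 0 0 := by
  intro M
  set p : Fin (r + 1) → ℂ := fun j => if j = 0 then 1 else (M + 2 : ℝ) with hp
  have hp0 : p 0 = 1 := by simp [hp]
  have hpj : ∀ j, j ≠ 0 → p j = (M + 2 : ℝ) := fun j hj => by simp [hp, hj]
  have hM := M.cast_nonneg (α := ℝ)
  have hps : ∀ j : Fin (r + 1), ps p j = ((1 + (j : ℕ) * (M + 2) : ℝ) : ℂ) := by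
    intro j
    induction j using Fin.induction with
    | zero => rw [ps_zero, hp0]; simp
    | succ j ih =>
      have h : ps p j.succ = ps p j.castSucc + p j.succ := by
        have h1 : Finset.Iic j.succ = insert j.succ (Finset.Iic j.castSucc) := by
          ext i
          simp only [Finset.mem_Iic, Finset.mem_insert, Fin.le_def, Fin.ext_iff, Fin.val_succ,
            Fin.val_castSucc]
          omega
        rw [ps, ps, h1, Finset.sum_insert (by simp [Fin.le_def]), add_comm]
      rw [h, ih, hpj _ (Fin.succ_ne_zero j)]
      push_cast [Fin.val_succ, Fin.val_castSucc]
      ring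
  have hell : ell (0, 0) p = 0 := by rw [ell_zero, hp0, sub_self]
  refine ⟨p, hell, ⟨fun j hj => absurd hj (by simp), fun j hj => ?_⟩, ?_⟩
  · rw [hps, Complex.ofReal_re]
    have : (1 : ℝ) ≤ (j : ℕ) := by exact_mod_cast (Fin.lt_def.1 hj : 0 < (j : ℕ))
    nlinarith
  cases r with
  | zero =>
    obtain ⟨g, hg, hg1, h⟩ := contBase_pole al
    refine ⟨1, one_ne_zero, ?_⟩
    have h1 : AnalyticAt ℂ (fun s : Fin 1 → ℂ => g (s 0)) p :=
      AnalyticAt.comp (g := g) (f := fun s : Fin 1 → ℂ => s 0) (hg (p 0)) (analyticAt_coord 0 p)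
    have h2 := h1.continuousAt.tendsto.mono_left
      (nhdsWithin_le_nhds (s := {s | ell ((0 : Fin 1), 0) s ≠ 0}))
    rw [hp0, hg1] at h2
    refine h2.congr' ?_
    filter_upwards [self_mem_nhdsWithin] with s hs
    have hs : ell ((0 : Fin 1), 0) s ≠ 0 := hs
    rw [ell_zero] at hs ⊢
    exact (h s (sub_ne_zero.1 hs)).symm
  | succ r =>
    have hU : p ∈ Ur (r + 2) (1 : ℕ) := by
      refine mem_Ur.2 fun i => ?_
      rw [hps, Complex.ofReal_re]
      have := (i : ℕ).cast_nonneg (α := ℝ)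
      push_cast
      nlinarith
    have hm : merge 0 p ∈ Ur (r + 1) 0 := by
      refine mem_Ur.2 fun j => ?_
      rw [ps_merge, hps]
      have := (j : ℕ).cast_nonneg (α := ℝ)
      simp only [Fin.val_succ, Complex.add_re, Complex.sub_re, Complex.ofReal_re, Complex.one_re,
        Complex.natCast_re]
      push_cast
      nlinarith
    have hF : AnalyticAt ℂ (contZ r (Fin.tail al)) (merge 0 p) := by
      refine (multipleHurwitz_analyticAt (tail_mem hal) hm).1.congr ?_
      filter_upwards [(isOpen_Ur _ _).mem_nhds hm] with s hs
      exact (contZ_eq r (tail_mem hal) hs).symm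
    have hA : AnalyticAt ℂ (fun s => contZ r (Fin.tail al) (merge 0 s) - emRem al 1 s) p :=
      (AnalyticAt.comp (g := contZ r (Fin.tail al)) hF (analyticAt_merge 0 p)).sub
        (emRem_analyticAt hal 1 hU).1
    have hE : emRem al 1 p = 0 := by
      rw [emRem]
      refine (tsum_congr fun n => ?_).trans tsum_zero
      have : emErr (al 1 - al 0) 1 (p 0 - 1) (n.1 0 + al 1) = 0 := by
        rw [hp0, emErr]
        simp [rpowC, poch]
      exact (congrArg (· * tailTerm al p n.1) this).trans (zero_mul _)
    refine ⟨contZ r (Fin.tail al) (merge 0 p), ?_, ?_⟩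
    · rw [contZ_eq r (tail_mem hal) hm]
      refine multipleHurwitz_ne_zero (tail_mem hal) hm fun j => ?_
      refine Fin.cases ?_ (fun j => ?_) j
      · rw [merge_zero, hp0, hpj _ (by simp)]
        simp
      · rw [merge_succ, hpj _ (Fin.succ_ne_zero _), Complex.ofReal_im]
    · have h2 := hA.continuousAt.tendsto.mono_left
        (nhdsWithin_le_nhds (s := {s | ell ((0 : Fin (r + 2)), 0) s ≠ 0}))
      rw [hE, sub_zero] at h2
      refine h2.congr' ?_
      filter_upwards [self_mem_nhdsWithin, nhdsWithin_le_nhds (contZ_eventually hal hU)]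
        with s hs hs'
      have hs : ell ((0 : Fin (r + 2)), 0) s ≠ 0 := hs
      rw [ell_zero] at hs ⊢
      rw [← hs', contPhi, mul_inv_cancel_left₀ hs, Finset.sum_range_one, bc_zero, poch_zero]
      ring

/-! ### The exact set of polar hyperplanes -/

lemma bc_one_ne_zero {b : ℝ} (h : b ≠ 1 / 2) : bc b 1 ≠ 0 := by
  rw [bc_ne_zero_iff, bernoulliFun_one]
  exact sub_ne_zero.2 h

lemma Nv_k_zero : ∀ (r : ℕ) {al : Fin (r + 1) → ℝ} (_ : ∀ i, al i ∈ Set.Ico (0 : ℝ) 1)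
    (i : Fin (r + 1)), Nv r al i 0 := by
  intro r
  induction r with
  | zero =>
    intro al hal i
    obtain rfl : i = 0 := Fin.ext (by omega)
    exact Nv_zero 0 hal
  | succ r ih =>
    intro al hal i
    refine Fin.cases (Nv_zero _ hal) (fun j => ?_) i
    exact Nv_step hal j le_rfl (by rw [bc_zero]; exact one_ne_zero) (ih (tail_mem hal) j)

/-- The top-order term of the expansion reduces `(j + 1, k)` to `(j, 0)`. -/
lemma Nv_of_bc {r : ℕ} {al : Fin (r + 2) → ℝ} (hal : ∀ i, al i ∈ Set.Ico (0 : ℝ) 1)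
    (j : Fin (r + 1)) {k : ℕ} (h : bc (al 1 - al 0) k ≠ 0) : Nv (r + 1) al j.succ k :=
  Nv_step hal j le_rfl h (by rw [Nat.sub_self]; exact Nv_k_zero r (tail_mem hal) j)

/-- Two consecutive differences of the parameters cannot both be `1 / 2`. -/
lemma sub_ne_half {r : ℕ} {al : Fin (r + 3) → ℝ} (hal : ∀ i, al i ∈ Set.Ico (0 : ℝ) 1)
    (h : al 1 - al 0 = 1 / 2) : Fin.tail al 1 - Fin.tail al 0 ≠ 1 / 2 := by
  intro h'
  have h1 : al 2 - al 1 = 1 / 2 := h'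
  linarith [(hal 2).2, (hal 0).1]

/-- If the difference of the first two parameters is `1 / 2`, so that the coefficient of order `1`
vanishes, the term of order `0` is used first and that of order `1` in the next depth. -/
lemma Nv_k_one {r : ℕ} {al : Fin (r + 3) → ℝ} (hal : ∀ i, al i ∈ Set.Ico (0 : ℝ) 1)
    (j : Fin (r + 1)) : Nv (r + 2) al j.succ.succ 1 := by
  by_cases h : al 1 - al 0 = 1 / 2
  · exact Nv_step hal j.succ (k' := 0) (by omega) (by rw [bc_zero]; exact one_ne_zero)
      (Nv_of_bc (tail_mem hal) j (bc_one_ne_zero (sub_ne_half hal h)))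
  · exact Nv_of_bc hal j.succ (bc_one_ne_zero h)

/-- All hyperplanes of index at least three are genuinely polar. -/
lemma Nv_high {r : ℕ} {al : Fin (r + 3) → ℝ} (hal : ∀ i, al i ∈ Set.Ico (0 : ℝ) 1)
    (hrat : ∃ q : ℚ, al 1 - al 0 = (q : ℝ)) (j : Fin (r + 1)) (k : ℕ) :
    Nv (r + 2) al j.succ.succ k := by
  have hb := abs_sub_le_one (r := r + 1) hal
  have hiff : ∀ m, bc (al 1 - al 0) m ≠ 0 ↔ _ := fun m =>
    (bc_ne_zero_iff _ m).trans (bernoulliFun_ne_zero_iff _ hb hrat m)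
  by_cases hk : bc (al 1 - al 0) k ≠ 0
  · exact Nv_of_bc hal j.succ hk
  have hcase : (al 1 - al 0 = 0 ∨ al 1 - al 0 = 1 / 2) ∧ Odd k := by
    rw [hiff] at hk
    push Not at hk
    obtain ⟨h0, h1, h2⟩ := hk
    by_cases hz : al 1 - al 0 = 0
    · exact ⟨Or.inl hz, Nat.not_even_iff_odd.1 (h0 hz).2⟩
    · have := h2 hz
      exact ⟨Or.inr this, Nat.not_even_iff_odd.1 (h1 this)⟩
  obtain ⟨hb01, hodd⟩ := hcase
  rcases eq_or_ne k 1 with rfl | hk1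
  · exact Nv_k_one hal j
  -- Split `k = (k - 1) + 1` or `k = 1 + (k - 1)` over two consecutive steps of the expansion.
  have heven : Even (k - 1) := Nat.Odd.sub_odd hodd odd_one
  have hpos : 1 ≤ k := hodd.pos
  have hbk : bc (al 1 - al 0) (k - 1) ≠ 0 := by
    rw [hiff]
    rcases hb01 with h | h
    · exact Or.inl ⟨h, Or.inr heven⟩
    · exact Or.inr (Or.inl ⟨h, heven⟩)
  have hsub : k - (k - 1) = 1 := by omega
  by_cases h2 : Fin.tail al 1 - Fin.tail al 0 = 1 / 2
  · have h1 : al 1 - al 0 ≠ 1 / 2 := fun h => sub_ne_half hal h h2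
    refine Nv_step hal j.succ hpos (bc_one_ne_zero h1) (Nv_of_bc (tail_mem hal) j ?_)
    rw [h2, bc_ne_zero_iff,
      bernoulliFun_ne_zero_iff (1 / 2) (by norm_num [abs_of_pos]) ⟨1 / 2, by norm_num⟩]
    exact Or.inr (Or.inl ⟨rfl, heven⟩)
  · refine Nv_step hal j.succ (Nat.sub_le k 1) hbk ?_
    rw [hsub]
    exact Nv_of_bc (tail_mem hal) j (bc_one_ne_zero h2)

/-- **Corollary 9.** For `r ≥ 2` with `α_2 − α_1` rational, the multiple Hurwitz zeta
function continues meromorphically to `ℂ^r` with exact set of (simple) polar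
hyperplanes given by the collection `S` above. -/
theorem stmt_18 (r : ℕ) (al : Fin (r + 2) → ℝ) (hal : ∀ i, al i ∈ Set.Ico (0 : ℝ) 1)
    (hrat : ∃ q : ℚ, al 1 - al 0 = (q : ℝ)) :
    ∃ F : (Fin (r + 2) → ℂ) → ℂ,
      AnalyticOnNhd ℂ F (polarSet (S18 r (al 1 - al 0)))ᶜ ∧
      (∀ s ∈ Ur (r + 2) 0, F s = multipleHurwitz al s) ∧
      SimplePolesAlong (S18 r (al 1 - al 0)) F ∧
      ∀ (i : Fin (r + 2)) (k : ℕ), S18 r (al 1 - al 0) i k →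
        GenuinePole (S18 r (al 1 - al 0)) F i k := by
  have hiff : ∀ m, bc (al 1 - al 0) m ≠ 0 ↔ _ := fun m =>
    (bc_ne_zero_iff _ m).trans (bernoulliFun_ne_zero_iff _ (abs_sub_le_one hal) hrat m)
  set P := S18 r (al 1 - al 0) with hP
  have hpol : ∀ p T, IsFull P p T → Pol T (contZ (r + 1) al) p := fun p T hT =>
    contZ_pol_step hal (contZ_pol r (tail_mem hal)) (Or.inl ⟨rfl, rfl⟩)
      (fun k hk => Or.inr (Or.inr ⟨by simp, (hiff k).1 hk⟩)) (fun i k hi => Or.inr (Or.inl hi)) hT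
  refine ⟨contZ (r + 1) al, fun p hp => ?_, fun s hs => contZ_eq (r + 1) hal hs,
    fun p T hT => ?_, fun i k hik => ?_⟩
  · refine (hpol p ∅ ?_).analyticAt
    rintro ⟨i, k⟩
    refine iff_of_false (Finset.notMem_empty _) fun h => hp ⟨i, k, h.1, mem_Hplane.2 h.2⟩
  · obtain ⟨G, hG, h⟩ := hpol p T fun q => (hT q.1 q.2).trans (and_congr_right' mem_Hplane)
    obtain ⟨V, hV, hVo, hpV⟩ := eventually_nhds_iff.1 (hG.eventually_analyticAt.and h)
    refine ⟨V, G, hVo, hpV, fun s hs => (hV s hs).1, fun s hs hsP => ?_⟩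
    exact (hV s hs).2 fun q hq h0 => hsP ⟨q.1, q.2, ((hT q.1 q.2).1 hq).1, mem_Hplane.2 h0⟩
  · have hNv : Nv (r + 1) al i k := by
      rcases hik with ⟨hi, rfl⟩ | hi | ⟨hi, hk⟩
      · exact Nv_k_zero _ hal i
      · cases r with
        | zero => omega
        | succ r =>
          obtain ⟨j, rfl⟩ : ∃ j : Fin (r + 1), i = j.succ.succ :=
            ⟨⟨i - 2, by omega⟩, Fin.ext (by simp only [Fin.val_succ]; omega)⟩
          exact Nv_high hal hrat j k
      · obtain rfl : i = (0 : Fin (r + 1)).succ := Fin.ext (by simpa using hi)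
        exact Nv_of_bc hal 0 ((hiff k).2 hk)
    obtain ⟨p, hp, hg, R, hR, hres⟩ := hNv 0
    refine ⟨p, mem_Hplane.2 hp, fun i' k' _ hne h => ?_, R, hR, ?_⟩
    · have h := mem_Hplane.1 h
      by_cases hi : i' = i
      · subst hi
        exact hne ⟨rfl, ell_inj h hp⟩
      · exact hg.ell_ne_zero hi k' h
    · refine Filter.Tendsto.mono_left hres (nhdsWithin_mono p fun s hs h0 => ?_)
      exact hs ⟨i, k, hik, mem_Hplane.2 h0⟩
end

section
/- For every integer n ≥ 1, the n-th Bernoulli polynomial B_n(t) has no multiple roots; equivalently, B_n(t) is a squarefree polynomial (over ℚ, hence over ℂ), i.e., B_n(t) and its derivative B_n'(t) have no common root. -/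
/-!
Since `B_n' = n B_{n-1}`, a multiple root of `B_n` is a common root `z ∈ ℂ` of `B_n` and `B_{n-1}`,
with `n ≥ 2`. Such a root is excluded 2-adically. Fix a valuation ring `A` of `ℂ` lying over `2`,
with maximal ideal `𝔪`.

Telescoping `B_{n+1}(z + 2) - B_{n+1}(z)` in two ways gives (`sum_two_pow`)
`z ^ n + (z + 1) ^ n = ∑ k, (n choose k) * (2 ^ k / (k + 1)) * (2 B_{n-k}(z))`.
The numbers `2 ^ k / (k + 1)` lie in `A`, so by induction `2 B_n(z) ∈ A` whenever `z ∈ A`.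

* A common root lies in `A` (`root_mem`). Otherwise `z⁻¹ ∈ 𝔪`, and dividing `2 B_n(z) = 0` by
  `z ^ (n - 1)` gives `2 z ≡ n` modulo `z⁻¹ A`; likewise `2 z ≡ n - 1`, so `z⁻¹` divides `1`.
* Modulo `2` only `k = 0, 1` survive: `z ^ n + (z + 1) ^ n ≡ 2 B_n(z) + n * 2 B_{n-1}(z)`. For a
  common root this vanishes, and `z ^ (n - 1) + (z + 1) ^ (n - 1) ≡ (n - 1) * 2 B_{n-2}(z)`.
* For `n` odd both power sums vanish modulo `2`, forcing `z + 1 ∈ 𝔪` and then `z ∈ 𝔪`, which is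
  absurd (`false_of_odd`).
* For `n` even, `2 B_{n-2}(z) ≡ z ^ (n - 2) + (z + 1) ^ (n - 2)`, and the congruences combine to
  `z ^ 2 + z + 1 ≡ 0` modulo `2` and `3 ∣ n`. Hence `z ^ n ≡ (z + 1) ^ n ≡ 1` modulo `4`, since
  `6 ∣ n`. But for even `n` the terms `k ≥ 2` of the identity vanish modulo `4`, so
  `z ^ n + (z + 1) ^ n ≡ 0` modulo `4`, a contradiction (`false_of_even`).
-/

namespace BernoulliSquarefree

open Finset Polynomial

/-! ### Identities for Bernoulli polynomials -/

/-- The `k`-th divided derivative of `B_n` is `n.choose k • B_{n-k}`. -/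
lemma hasseDeriv_bernoulli (n k : ℕ) :
    hasseDeriv k (Polynomial.bernoulli n) = C (n.choose k : ℚ) * Polynomial.bernoulli (n - k) := by
  ext i
  rw [hasseDeriv_coeff, coeff_C_mul, coeff_bernoulli, coeff_bernoulli]
  by_cases h : i + k ≤ n
  · rw [if_pos h, if_pos (by omega), show n - k - i = n - (i + k) by omega]
    have := Nat.choose_mul (n := n) (k := i + k) (s := k) (by omega)
    rw [Nat.add_sub_cancel] at this
    have h2 : (n.choose (i + k) : ℚ) * (i + k).choose k = n.choose k * (n - k).choose i := by
      exact_mod_cast this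
    linear_combination _root_.bernoulli (n - (i + k)) * h2
  · rw [if_neg h]
    by_cases h' : k ≤ n
    · rw [if_neg (by omega)]; simp
    · rw [Nat.choose_eq_zero_of_lt (not_le.1 h')]; simp

/-- Addition formula `B_n(z + w) = ∑ (n choose k) B_{n-k}(z) w ^ k`. -/
lemma aeval_add_bernoulli (n : ℕ) (z : ℂ) (w : ℚ) :
    aeval (z + w) (Polynomial.bernoulli n) =
      ∑ k ∈ range (n + 1), (n.choose k : ℂ) * w ^ k * aeval z (Polynomial.bernoulli (n - k)) := by
  have hdeg : (taylor w (Polynomial.bernoulli n)).natDegree < n + 1 := by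
    rw [natDegree_taylor, Nat.lt_succ_iff, natDegree_le_iff_coeff_eq_zero]
    intro i hi
    rw [coeff_bernoulli, if_neg (by omega)]
  have hdeg' : (taylor z ((Polynomial.bernoulli n).map (algebraMap ℚ ℂ))).natDegree < n + 1 := by
    rw [natDegree_taylor] at hdeg ⊢
    exact natDegree_map_le.trans_lt hdeg
  have h := taylor_eval z ((Polynomial.bernoulli n).map (algebraMap ℚ ℂ)) (w : ℂ)
  rw [eval_eq_sum_range' hdeg'] at h
  rw [aeval_def, ← eval_map, add_comm z, ← h]
  refine sum_congr rfl fun k _ => ?_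
  have hmap : hasseDeriv k ((Polynomial.bernoulli n).map (algebraMap ℚ ℂ)) =
      (hasseDeriv k (Polynomial.bernoulli n)).map (algebraMap ℚ ℂ) := by
    ext i
    simp [hasseDeriv_coeff]
  rw [taylor_coeff, hmap, hasseDeriv_bernoulli, eval_map, ← aeval_def, map_mul, aeval_C]
  simp only [eq_ratCast, Rat.cast_natCast]
  ring

lemma aeval_add_one_bernoulli (n : ℕ) (z : ℂ) :
    aeval (z + 1) (Polynomial.bernoulli n) =
      aeval z (Polynomial.bernoulli n) + n * z ^ (n - 1) := by
  have := congrArg (aeval z) (bernoulli_comp_one_add_X n)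
  rw [aeval_comp] at this
  simpa [add_comm] using this

/-- The sum `z ^ n + (z + 1) ^ n = (B_{n+1}(z + 2) - B_{n+1}(z)) / (n + 1)`, expanded in powers
of the step `2`. -/
lemma sum_two_pow (n : ℕ) (z : ℂ) :
    ∑ k ∈ range (n + 1), (n.choose k : ℂ) * (2 ^ k / (k + 1)) *
      (2 * aeval z (Polynomial.bernoulli (n - k))) = z ^ n + (z + 1) ^ n := by
  have h1 := aeval_add_one_bernoulli (n + 1) z
  have h2 := aeval_add_one_bernoulli (n + 1) (z + 1)
  have h3 := aeval_add_bernoulli (n + 1) z 2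
  rw [sum_range_succ'] at h3
  have hn : ((n : ℂ) + 1) ≠ 0 := by exact_mod_cast n.succ_ne_zero
  have h4 : ∀ k ∈ range (n + 1), ((n + 1).choose (k + 1) : ℂ) * ((2 : ℚ) : ℂ) ^ (k + 1) *
      aeval z (Polynomial.bernoulli (n + 1 - (k + 1))) =
      (n + 1) * ((n.choose k : ℂ) * (2 ^ k / (k + 1)) *
        (2 * aeval z (Polynomial.bernoulli (n - k)))) := by
    intro k _
    have hk : ((k : ℂ) + 1) ≠ 0 := by exact_mod_cast k.succ_ne_zero
    have : ((n : ℂ) + 1) * n.choose k = (n + 1).choose (k + 1) * (k + 1) := by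
      exact_mod_cast Nat.add_one_mul_choose_eq n k
    rw [Nat.add_sub_add_right]
    push_cast
    field_simp
    linear_combination -(aeval z (Polynomial.bernoulli (n - k))) * 2 ^ (k + 1) * this
  rw [sum_congr rfl h4, ← mul_sum] at h3
  apply mul_left_cancel₀ hn
  have e : z + 1 + 1 = z + ((2 : ℚ) : ℂ) := by push_cast; ring
  rw [e] at h2
  simp only [Nat.choose_zero_right, Nat.sub_zero, pow_zero, Nat.add_sub_cancel, Nat.cast_add,
    Nat.cast_one] at h1 h2 h3
  linear_combination h1 + h2 - h3

/-! ### A 2-adic valuation ring of `ℂ` -/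

/-- There is a valuation ring of `ℂ` lying over the prime `2`. -/
lemma exists_valuationSubring : ∃ A : ValuationSubring ℂ, (2 : ℂ)⁻¹ ∉ A := by
  have hI : (Ideal.span {(2 : (⊥ : Subring ℂ))}) ≠ ⊤ := by
    rw [Ne, Ideal.span_singleton_eq_top]
    rintro h
    obtain ⟨⟨a, ha⟩, h⟩ := h.exists_right_inv
    obtain ⟨m, rfl⟩ := Subring.mem_bot.1 ha
    have h' : (2 : ℂ) * m = 1 := congrArg Subtype.val h
    have : (2 : ℤ) * m = 1 := by exact_mod_cast h'
    omega
  obtain ⟨A, -, hA⟩ := Ideal.image_subset_nonunits_valuationSubring _ hI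
  refine ⟨A, ?_⟩
  have : (2 : ℂ) ∈ A.nonunits := hA ⟨2, Ideal.subset_span rfl, rfl⟩
  exact (A.mem_nonunits_iff_or.1 this).resolve_left two_ne_zero

variable {A : ValuationSubring ℂ}

lemma two_mem_maximalIdeal (hA : (2 : ℂ)⁻¹ ∉ A) : (2 : A) ∈ IsLocalRing.maximalIdeal A := by
  rw [IsLocalRing.mem_maximalIdeal, mem_nonunits_iff]
  intro h
  obtain ⟨b, hb⟩ := h.exists_right_inv
  have h' : (2 : ℂ) * b = 1 := congrArg Subtype.val hb
  exact hA (eq_inv_of_mul_eq_one_right h' ▸ b.2)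

lemma inv_odd_mem (hA : (2 : ℂ)⁻¹ ∉ A) (m : ℕ) : ((2 * m + 1 : ℕ) : ℂ)⁻¹ ∈ A := by
  have hu : IsUnit ((2 * m + 1 : ℕ) : A) := by
    by_contra h
    have h1 : ((2 * m + 1 : ℕ) : A) ∈ IsLocalRing.maximalIdeal A := h
    have h2 := Ideal.mul_mem_right (m : A) _ (two_mem_maximalIdeal hA)
    apply (Ideal.ne_top_iff_one _).1 (IsLocalRing.maximalIdeal.isMaximal A).ne_top
    convert sub_mem h1 h2 using 1
    push_cast; ring
  obtain ⟨b, hb⟩ := hu.exists_right_inv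
  have h' : ((2 * m + 1 : ℕ) : ℂ) * b = 1 := by
    exact congrArg Subtype.val hb
  exact eq_inv_of_mul_eq_one_right h' ▸ b.2

/-- Since `2 ^ v ∣ m` forces `2 ^ v ≤ m`, the fraction `2 ^ j / m` is 2-integral as soon as
`m < 2 ^ (j + 1)`. -/
lemma two_pow_div_mem (hA : (2 : ℂ)⁻¹ ∉ A) (j : ℕ) :
    ∀ m : ℕ, m ≠ 0 → m < 2 ^ (j + 1) → (2 : ℂ) ^ j / m ∈ A := by
  induction j with
  | zero =>
    intro m h0 h1
    obtain rfl : m = 1 := by omega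
    simp [A.one_mem]
  | succ j ih =>
    intro m h0 h1
    obtain ⟨r, rfl | rfl⟩ := m.even_or_odd'
    · have := ih r (by omega) (by rw [pow_succ] at h1; omega)
      convert this using 1
      have : (r : ℂ) ≠ 0 := by exact_mod_cast (by omega : r ≠ 0)
      push_cast
      field_simp
      ring
    · rw [div_eq_mul_inv]
      exact A.mul_mem _ _ (pow_mem (by exact_mod_cast natCast_mem A 2) _) (inv_odd_mem hA r)

lemma add_one_lt_two_pow (k : ℕ) : k + 5 < 2 ^ (k + 3) := by
  induction k with
  | zero => norm_num
  | succ k ih => rw [Nat.succ_add, pow_succ]; omega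

/-- The coefficients `2 ^ k / (k + 1)` are 2-integral, divisible by `2` for `2 ≤ k`, and divisible
by `4` for `k = 2` and `4 ≤ k`. -/
lemma exists_coeff (hA : (2 : ℂ)⁻¹ ∉ A) : ∃ γ : ℕ → A,
    (∀ k, ((γ k : A) : ℂ) = 2 ^ k / (k + 1)) ∧ γ 0 = 1 ∧ γ 1 = 1 ∧ γ 3 = 2 ∧
    4 ∣ γ 2 ∧ ∀ k, 4 ∣ γ (k + 4) := by
  have hmem (k : ℕ) : (2 : ℂ) ^ k / (k + 1) ∈ A := by
    have := two_pow_div_mem hA k (k + 1) (by omega) (by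
      rw [pow_succ]; have := Nat.lt_two_pow_self (n := k); omega)
    exact_mod_cast this
  refine ⟨fun k => ⟨_, hmem k⟩, fun k => rfl, ?_, ?_, ?_, ?_, ?_⟩
  · ext; norm_num
  · ext; norm_num
  · apply Subtype.ext
    change (2 : ℂ) ^ 3 / ((3 : ℕ) + 1) = 2
    norm_num
  · refine ⟨⟨_, inv_odd_mem hA 1⟩, Subtype.ext ?_⟩
    change (2 : ℂ) ^ 2 / ((2 : ℕ) + 1) = 4 * ((2 * 1 + 1 : ℕ) : ℂ)⁻¹
    norm_num
  · intro k
    have := two_pow_div_mem hA (k + 2) (k + 5) (by omega) (add_one_lt_two_pow k)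
    refine ⟨⟨_, this⟩, Subtype.ext ?_⟩
    change (2 : ℂ) ^ (k + 4) / ((k + 4 : ℕ) + 1) = 4 * (2 ^ (k + 2) / ((k + 5 : ℕ) : ℂ))
    push_cast
    ring

/-- A weak von Staudt theorem: `2 B_n(z)` is 2-integral when `z` is. -/
lemma two_mul_aeval_mem (hA : (2 : ℂ)⁻¹ ∉ A) {z : ℂ} (hz : z ∈ A) (n : ℕ) :
    2 * aeval z (Polynomial.bernoulli n) ∈ A := by
  obtain ⟨γ, hγ, -⟩ := exists_coeff hA
  induction n using Nat.strong_induction_on with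
  | _ n ih =>
    have h := sum_two_pow n z
    rw [sum_range_succ'] at h
    simp only [Nat.choose_zero_right, Nat.sub_zero, pow_zero, Nat.cast_one, Nat.cast_zero,
      zero_add, div_one, one_mul] at h
    rw [← eq_sub_iff_add_eq'] at h
    rw [h]
    refine sub_mem (add_mem (pow_mem hz _) (pow_mem (add_mem hz (one_mem A)) _))
      (sum_mem fun k hk => mul_mem (mul_mem (natCast_mem A _) ?_) (ih _ ?_))
    · rw [← hγ]; exact (γ _).2
    · rw [mem_range] at hk; omega

/-! ### Common roots are 2-integral -/

/-- If `z⁻¹` is 2-integral and `B_{m+1}(z) = 0`, then `2 z ≡ m + 1` modulo `z⁻¹`: divide the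
equation by `z ^ m`; the first two terms are `2 z` and `-(m + 1)`. -/
lemma exists_two_mul_eq (hA : (2 : ℂ)⁻¹ ∉ A) {z : ℂ} (hz0 : z ≠ 0) (hz : z⁻¹ ∈ A) (m : ℕ)
    (h : aeval z (Polynomial.bernoulli (m + 1)) = 0) :
    ∃ a ∈ A, 2 * z = (m + 1) - z⁻¹ * a := by
  have hB (k : ℕ) : 2 * ((_root_.bernoulli k : ℚ) : ℂ) ∈ A := by
    have := two_mul_aeval_mem hA (zero_mem A) k
    rwa [← map_zero (algebraMap ℚ ℂ), aeval_algebraMap_apply, coe_aeval_eq_eval,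
      bernoulli_eval_zero] at this
  refine ⟨∑ i ∈ range m, ((m + 1).choose (i + 2) : ℂ) * (2 * (_root_.bernoulli (i + 2) : ℚ)) *
    z⁻¹ ^ i, sum_mem fun i _ => mul_mem (mul_mem (natCast_mem A _) (hB _)) (pow_mem hz _), ?_⟩
  rw [Polynomial.bernoulli, map_sum, sum_range_succ', sum_range_succ'] at h
  have e : ∀ i ∈ range m, aeval z (monomial (m + 1 - (i + 1 + 1))
      (_root_.bernoulli (i + 1 + 1) * ((m + 1).choose (i + 1 + 1) : ℚ))) =
      z ^ m * 2⁻¹ * (z⁻¹ * (((m + 1).choose (i + 2) : ℂ) *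
        (2 * (_root_.bernoulli (i + 2) : ℚ)) * z⁻¹ ^ i)) := by
    intro i hi
    rw [mem_range] at hi
    obtain ⟨j, rfl⟩ : ∃ j, m = j + (i + 1) := ⟨m - (i + 1), by omega⟩
    rw [aeval_monomial, show j + (i + 1) + 1 - (i + 1 + 1) = j by omega]
    simp only [map_mul, eq_ratCast, Rat.cast_natCast, inv_pow]
    field_simp
    ring
  rw [sum_congr rfl e, ← mul_sum, ← mul_sum] at h
  simp only [aeval_monomial, zero_add, _root_.bernoulli_one, _root_.bernoulli_zero,
    Nat.choose_one_right, Nat.choose_zero_right, Nat.add_sub_cancel, Nat.sub_zero] at h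
  have hzm : z ^ m ≠ 0 := pow_ne_zero _ hz0
  apply mul_left_cancel₀ hzm
  simp only [map_mul, map_div₀, map_neg, map_one, map_ofNat, map_add, map_natCast, Nat.cast_add,
    Nat.cast_one] at h
  linear_combination 2 * h

/-- A common root of two consecutive Bernoulli polynomials is 2-integral. -/
lemma root_mem (hA : (2 : ℂ)⁻¹ ∉ A) {z : ℂ} (m : ℕ)
    (h1 : aeval z (Polynomial.bernoulli (m + 1)) = 0)
    (h2 : aeval z (Polynomial.bernoulli (m + 2)) = 0) : z ∈ A := by
  by_cases hz0 : z = 0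
  · exact hz0 ▸ zero_mem A
  rcases A.mem_or_inv_mem z with hz | hz
  · exact hz
  obtain ⟨a, ha, ea⟩ := exists_two_mul_eq hA hz0 hz m h1
  obtain ⟨b, hb, eb⟩ := exists_two_mul_eq hA hz0 hz (m + 1) h2
  have : z = b - a := by
    push_cast at eb
    have : z⁻¹ * (b - a) = 1 := by linear_combination eb - ea
    field_simp at this
    exact this.symm
  exact this ▸ sub_mem hb ha

/-! ### Congruences modulo 2 and 4 -/

section LocalRing

variable {R : Type*} [CommRing R]

/-- With `γ k = 2 ^ k / (k + 1)` and `β k = 2 B_k(z)` as in `sum_two_pow`, only the terms `k = 0, 1`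
survive modulo `2`. -/
lemma two_dvd_of_sum {γ β : ℕ → R} {n : ℕ} {s : R} (h0 : γ 0 = 1) (h1 : γ 1 = 1) (h3 : γ 3 = 2)
    (h2 : 4 ∣ γ 2) (h4 : ∀ k, 4 ∣ γ (k + 4))
    (hs : ∑ k ∈ range (n + 2), ((n + 1).choose k : R) * γ k * β (n + 1 - k) = s) :
    2 ∣ s - β (n + 1) - (n + 1) * β n := by
  have h24 : (2 : R) ∣ 4 := ⟨2, by norm_num⟩
  rw [sum_range_succ', sum_range_succ'] at hs
  simp only [zero_add, h0, h1, Nat.choose_zero_right, Nat.choose_one_right, Nat.add_sub_cancel,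
    Nat.sub_zero] at hs
  rw [← hs]
  have : 2 ∣ ∑ k ∈ range n, ((n + 1).choose (k + 1 + 1) : R) * γ (k + 1 + 1) *
      β (n + 1 - (k + 1 + 1)) := by
    refine dvd_sum fun k _ => Dvd.dvd.mul_right (Dvd.dvd.mul_left ?_ _) _
    match k with
    | 0 => exact h24.trans h2
    | 1 => exact h3 ▸ dvd_rfl
    | k + 2 => exact h24.trans (h4 k)
  convert this using 1
  push_cast
  ring

/-- When the index `n + 1` is even, `two_dvd_of_sum` holds modulo `4`: the only other term not
divisible by `4` on account of `γ` is `k = 3`, where `γ 3 = 2` and the binomial coefficient is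
even. -/
lemma four_dvd_of_sum {γ β : ℕ → R} {n : ℕ} {s : R} (hn : Odd n) (h0 : γ 0 = 1) (h1 : γ 1 = 1)
    (h3 : γ 3 = 2) (h2 : 4 ∣ γ 2) (h4 : ∀ k, 4 ∣ γ (k + 4))
    (hs : ∑ k ∈ range (n + 2), ((n + 1).choose k : R) * γ k * β (n + 1 - k) = s) :
    4 ∣ s - β (n + 1) - (n + 1) * β n := by
  rw [sum_range_succ', sum_range_succ'] at hs
  simp only [zero_add, h0, h1, Nat.choose_zero_right, Nat.choose_one_right, Nat.add_sub_cancel,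
    Nat.sub_zero] at hs
  rw [← hs]
  have hc : 2 ∣ (n + 1).choose 3 := by
    -- `3 * choose (n + 1) 3 = (n + 1) * choose n 2`, and `n + 1` is even
    have h := Nat.add_one_mul_choose_eq n 2
    have : 2 ∣ (n + 1).choose 3 * 3 := h ▸ Dvd.dvd.mul_right hn.add_one.two_dvd _
    omega
  have : 4 ∣ ∑ k ∈ range n, ((n + 1).choose (k + 1 + 1) : R) * γ (k + 1 + 1) *
      β (n + 1 - (k + 1 + 1)) := by
    refine dvd_sum fun k _ => Dvd.dvd.mul_right ?_ _
    match k with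
    | 0 => exact Dvd.dvd.mul_left h2 _
    | 1 =>
      obtain ⟨c, hc⟩ := hc
      refine ⟨c, ?_⟩
      change ((n + 1).choose 3 : R) * γ 3 = _
      rw [hc, h3]; push_cast; ring
    | k + 2 => exact Dvd.dvd.mul_left (h4 k) _
  convert this using 1
  push_cast
  ring

variable [IsLocalRing R]

/-- If `2` divides `z ^ n + (z + 1) ^ n` with `n ≠ 0`, then `z` and `z + 1` are both units: if one
of them were in the maximal ideal, so would be the other, and hence their difference `1`. -/
lemma isUnit_of_two_dvd (hR : (2 : R) ∈ IsLocalRing.maximalIdeal R) {z : R} {n : ℕ} (hn : n ≠ 0)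
    (h : 2 ∣ z ^ n + (z + 1) ^ n) : IsUnit z ∧ IsUnit (z + 1) := by
  have hp : (IsLocalRing.maximalIdeal R).IsPrime := inferInstance
  have h1 := (Ideal.ne_top_iff_one _).1 hp.ne_top
  have h' := Ideal.mem_of_dvd _ h hR
  constructor
  · by_contra hz
    have hz : z ∈ IsLocalRing.maximalIdeal R := hz
    have : (z + 1) ^ n ∈ IsLocalRing.maximalIdeal R :=
      (Ideal.add_mem_iff_right _ (Ideal.pow_mem_of_mem _ hz n (by omega))).1 h'
    exact h1 ((Ideal.add_mem_iff_right _ hz).1 (hp.mem_of_pow_mem _ this))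
  · by_contra hz
    have hz : z + 1 ∈ IsLocalRing.maximalIdeal R := hz
    have : z ^ n ∈ IsLocalRing.maximalIdeal R :=
      (Ideal.add_mem_iff_left _ (Ideal.pow_mem_of_mem _ hz n (by omega))).1 h'
    exact h1 ((Ideal.add_mem_iff_right _ (hp.mem_of_pow_mem _ this)).1 hz)

/-- The odd case, with `n + 1` the odd degree: modulo `2`,
`z ^ n + (z + 1) ^ n` and `z ^ (n + 1) + (z + 1) ^ (n + 1)` cannot both vanish. -/
lemma false_of_odd (hR : (2 : R) ∈ IsLocalRing.maximalIdeal R) {z : R} {n : ℕ} (hn : n ≠ 0)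
    (h1 : 2 ∣ z ^ n + (z + 1) ^ n) (h2 : 2 ∣ z ^ (n + 1) + (z + 1) ^ (n + 1)) : False := by
  obtain ⟨-, hu⟩ := isUnit_of_two_dvd hR hn h1
  have h : 2 ∣ (z + 1) ^ n := by
    convert h2.sub (h1.mul_left z) using 1
    ring
  exact hR (isUnit_of_dvd_unit h (hu.pow n))

/-- The even case, with `m + 2` the degree: the hypotheses force `z ^ 2 + z + 1 ≡ 0` modulo `2` and `6 ∣ m + 2`, whence
`z ^ (m + 2)` and `(z + 1) ^ (m + 2)` are both `1` modulo `4`. -/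
lemma false_of_even [IsDomain R] (hR : (2 : R) ∈ IsLocalRing.maximalIdeal R) (h20 : (2 : R) ≠ 0)
    {z : R} {m : ℕ} (hm : Even m)
    (h1 : 2 ∣ z ^ m * (z + 1) + (z + 1) ^ m * z)
    (h2 : 4 ∣ z ^ (m + 2) + (z + 1) ^ (m + 2)) : False := by
  have h22 : (2 : R) ∣ z ^ (m + 2) + (z + 1) ^ (m + 2) := (Dvd.intro 2 (by norm_num)).trans h2
  obtain ⟨hz, hy⟩ := isUnit_of_two_dvd hR (by omega) h22
  have hn2 : ¬ IsUnit (2 : R) := hR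
  have hω : 2 ∣ z ^ 2 + z + 1 := by
    have h : 2 ∣ (z + 1) ^ m * (z ^ 3 - (z + 1) ^ 3) := by
      convert (h1.mul_left (z ^ 2)).sub (h22.mul_left (z + 1)) using 1
      ring
    rw [(hy.pow m).dvd_mul_left] at h
    convert h.add (dvd_mul_right 2 (2 * z ^ 2 + 2 * z + 1)) using 1
    ring
  have hz3 : 2 ∣ z ^ 3 - 1 := by
    convert hω.mul_left (z - 1) using 1; ring
  have hy3 : 2 ∣ (z + 1) ^ 3 - 1 := by
    convert (hω.add (dvd_mul_right 2 (z + 1))).mul_left z using 1; ring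
  -- `z + (z + 1)` is odd
  have hodd : ¬ (2 : R) ∣ z + (z + 1) := fun h => hn2 (isUnit_of_dvd_one (by
    convert h.sub (dvd_mul_right 2 z) using 1; ring))
  have hzp (j : ℕ) : 2 ∣ z ^ (3 * j) - 1 := by
    rw [pow_mul]; exact hz3.trans (sub_one_dvd_pow_sub_one _ _)
  have hyp (j : ℕ) : 2 ∣ (z + 1) ^ (3 * j) - 1 := by
    rw [pow_mul]; exact hy3.trans (sub_one_dvd_pow_sub_one _ _)
  obtain ⟨j, hj⟩ : ∃ j, m = 3 * j ∨ m = 3 * j + 1 ∨ m = 3 * j + 2 := ⟨m / 3, by omega⟩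
  rcases hj with rfl | rfl | rfl
  · apply hodd
    -- modulo `2`, `h1` reduces to `(z + 1) + z ≡ 0`
    convert (h1.sub ((hzp j).mul_right (z + 1))).sub ((hyp j).mul_right z) using 1
    ring
  · -- `m + 2 = 3 * (j + 1)` with `j + 1` even
    obtain ⟨i, hi⟩ : ∃ i, 3 * j + 1 + 2 = 6 * i := by
      obtain ⟨r, hr⟩ := hm
      exact ⟨(j + 1) / 2, by omega⟩
    rw [hi] at h2
    have key (x : R) (hx : 2 ∣ x ^ 3 - 1) : 4 ∣ x ^ (6 * i) - 1 := by
      rw [pow_mul]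
      refine Dvd.dvd.trans ?_ (sub_one_dvd_pow_sub_one _ _)
      obtain ⟨c, hc⟩ := hx
      exact ⟨c ^ 2 + c, by linear_combination (x ^ 3 + 1 + 2 * c) * hc⟩
    have h42 : (2 * 2 : R) ∣ 2 * 1 := by
      convert (h2.sub (key z hz3)).sub (key (z + 1) hy3) using 1 <;> ring
    exact hn2 (isUnit_of_dvd_one ((mul_dvd_mul_iff_left h20).1 h42))
  · -- modulo `2`, `h1` reduces to `z * (z + 1) * (z + (z + 1)) ≡ 0`
    apply hodd
    have h : 2 ∣ (z * (z + 1)) * (z + (z + 1)) := by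
      convert (h1.sub ((hzp j).mul_right (z ^ 2 * (z + 1)))).sub
        ((hyp j).mul_right ((z + 1) ^ 2 * z)) using 1
      ring
    rwa [(hz.mul hy).dvd_mul_left] at h

end LocalRing

/-- Consecutive Bernoulli polynomials have no common root. -/
lemma no_common_root (m : ℕ) (z : ℂ) (h1 : aeval z (Polynomial.bernoulli (m + 1)) = 0)
    (h2 : aeval z (Polynomial.bernoulli (m + 2)) = 0) : False := by
  obtain ⟨A, hA⟩ := exists_valuationSubring
  have hR := two_mem_maximalIdeal hA
  obtain ⟨γ, hγ, g0, g1, g3, g2, g4⟩ := exists_coeff hA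
  lift z to A using root_mem hA m h1 h2
  let β : ℕ → A := fun k => ⟨_, two_mul_aeval_mem hA z.2 k⟩
  have hβ1 : β (m + 1) = 0 := Subtype.ext (by simp [β, h1])
  have hβ2 : β (m + 2) = 0 := Subtype.ext (by simp [β, h2])
  have hs (n : ℕ) : ∑ k ∈ range (n + 1), (n.choose k : A) * γ k * β (n - k) =
      z ^ n + (z + 1) ^ n := by
    apply Subtype.ext
    have := sum_two_pow n (z : ℂ)
    simp only [← hγ] at this
    push_cast
    exact this
  have c1 := two_dvd_of_sum g0 g1 g3 g2 g4 (hs (m + 1))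
  rcases m.even_or_odd with hm | hm
  · have c2 := four_dvd_of_sum hm.add_one g0 g1 g3 g2 g4 (hs (m + 2))
    rw [hβ2, hβ1, mul_zero, sub_zero, sub_zero] at c2
    rw [hβ1, sub_zero] at c1
    refine false_of_even hR two_ne_zero hm ?_ c2
    have c0 : 2 ∣ z ^ m + (z + 1) ^ m - β m := by
      rcases m with _ | m
      · have : β 0 = 2 := Subtype.ext (by simp [β]; rfl)
        rw [this, pow_zero, pow_zero, one_add_one_eq_two, sub_self]; exact dvd_zero 2
      · have c := two_dvd_of_sum g0 g1 g3 g2 g4 (hs (m + 1))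
        have hd : (2 : A) ∣ (m + 1) * β m := by
          refine Dvd.dvd.mul_right ?_ _
          exact_mod_cast Nat.cast_dvd_cast (α := A) hm.two_dvd
        convert c.add hd using 1
        ring
    have hd : (2 : A) ∣ m * β m :=
      Dvd.dvd.mul_right (by exact_mod_cast Nat.cast_dvd_cast (α := A) hm.two_dvd) _
    convert ((c1.add hd).sub c0).add (dvd_mul_right 2 (z ^ m)) using 1
    ring
  · have c2 := two_dvd_of_sum g0 g1 g3 g2 g4 (hs (m + 2))
    rw [hβ2, hβ1, mul_zero, sub_zero, sub_zero] at c2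
    have hd : (2 : A) ∣ (m + 1) * β m := by
      refine Dvd.dvd.mul_right ?_ _
      exact_mod_cast Nat.cast_dvd_cast (α := A) hm.add_one.two_dvd
    refine false_of_odd hR (Nat.succ_ne_zero m) ?_ c2
    convert c1.add hd using 1
    rw [hβ1, Nat.succ_eq_add_one]
    ring

lemma aeval_derivative_ne_zero (n : ℕ) (hn : 1 ≤ n) (z : ℂ)
    (h : aeval z (Polynomial.bernoulli n) = 0) :
    aeval z (derivative (Polynomial.bernoulli n)) ≠ 0 := by
  intro h'
  obtain ⟨n, rfl⟩ : ∃ m, n = m + 1 := ⟨n - 1, by omega⟩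
  rw [derivative_bernoulli_add_one, map_mul] at h'
  have hn0 : aeval z ((n : ℚ[X]) + 1) ≠ 0 := by
    simp only [map_add, map_natCast, map_one]
    exact_mod_cast n.succ_ne_zero
  have h0 := (mul_eq_zero.1 h').resolve_left hn0
  rcases n with _ | m
  · simp at h0
  · exact no_common_root m z h0 h

end BernoulliSquarefree

/-- **Brillhart–Dilcher.** For `n ≥ 1`, the Bernoulli polynomial `B_n(t)` has no
multiple roots: it is squarefree (over `ℚ`, hence over `ℂ`), i.e. `B_n` and its
derivative `B_n'` have no common (complex) root. -/
theorem stmt_19 (n : ℕ) (hn : 1 ≤ n) :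
    Squarefree (Polynomial.bernoulli n) ∧
    ∀ z : ℂ, Polynomial.aeval z (Polynomial.bernoulli n) = 0 →
      Polynomial.aeval z (Polynomial.derivative (Polynomial.bernoulli n)) ≠ 0 := by
  refine ⟨?_, BernoulliSquarefree.aeval_derivative_ne_zero n hn⟩
  rintro d ⟨q, hq⟩
  by_contra hd
  have hp0 : Polynomial.bernoulli n ≠ 0 := by
    intro h
    have := Polynomial.coeff_bernoulli n n
    simp [h] at this
  have hd0 : d ≠ 0 := by
    rintro rfl
    simp [hp0] at hq
  have hdeg : d.degree ≠ 0 := fun h => hd (Polynomial.isUnit_iff_degree_eq_zero.2 h)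
  obtain ⟨z, hz⟩ := IsAlgClosed.exists_aeval_eq_zero ℂ d hdeg
  refine BernoulliSquarefree.aeval_derivative_ne_zero n hn z ?_ ?_
  · simp [hq, hz]
  · simp [hq, hz]
end
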